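/- A series-parallel graph G is minimally 1/2-tough if and only if G is a series connection of an arbitrary number of pearls and at least two single edges, in which the first and last constituents of the series connection are edges. Consequently, every minimally 1/2-tough series-parallel graph has a vertex of degree 1. -/

import Mathlib

open SimpleGraph

noncomputable def numComp {V : Type*} (G : SimpleGraph V) (S : Set V) : ℕ :=
  Nat.card (SimpleGraph.induce Sᶜ G).ConnectedComponent

def IsCutset {V : Type*} (G : SimpleGraph V) (S : Set V) : Prop := 1 < numComp G S

noncomputable def toughness {V : Type*} (G : SimpleGraph V) : ℝ :=
  sInf {r : ℝ | ∃ S : Set V, IsCutset G S ∧ r = (S.ncard : ℝ) / (numComp G S : ℝ)}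

def IsToughSet {V : Type*} (G : SimpleGraph V) (S : Set V) : Prop :=
  IsCutset G S ∧ (S.ncard : ℝ) = toughness G * (numComp G S : ℝ)

def MinTough {V : Type*} (G : SimpleGraph V) (t : ℝ) : Prop :=
  toughness G = t ∧ ∀ e ∈ G.edgeSet, toughness (G.deleteEdges {e}) < t

def IsCutVertex {V : Type*} (G : SimpleGraph V) (x : V) : Prop := IsCutset G {x}

inductive SPTree (V : Type*) where
  | edge (u v : V) : SPTree V
  | series (l r : SPTree V) : SPTree V
  | parallel (l r : SPTree V) : SPTree V

namespace SPTree

def src {V : Type*} : SPTree V → V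
  | edge u _ => u
  | series l _ => l.src
  | parallel l _ => l.src

def tgt {V : Type*} : SPTree V → V
  | edge _ v => v
  | series _ r => r.tgt
  | parallel l _ => l.tgt

def verts {V : Type*} : SPTree V → Set V
  | edge u v => {u, v}
  | series l r => l.verts ∪ r.verts
  | parallel l r => l.verts ∪ r.verts

def edges {V : Type*} : SPTree V → Set (Sym2 V)
  | edge u v => {s(u, v)}
  | series l r => l.edges ∪ r.edges
  | parallel l r => l.edges ∪ r.edges

def WF {V : Type*} : SPTree V → Prop
  | edge u v => u ≠ v
  | series l r => l.WF ∧ r.WF ∧ l.tgt = r.src ∧ l.verts ∩ r.verts = {l.tgt}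
  | parallel l r => l.WF ∧ r.WF ∧ l.src = r.src ∧ l.tgt = r.tgt ∧
      l.verts ∩ r.verts = {l.src, l.tgt} ∧ Disjoint l.edges r.edges

end SPTree

/-- `G` is the series-parallel graph given by the (well-formed, spanning) sp-tree `T`. -/
def RepresentsSP {V : Type*} (G : SimpleGraph V) (T : SPTree V) : Prop :=
  T.WF ∧ T.verts = Set.univ ∧ G = SimpleGraph.fromEdgeSet T.edges

def IsSPGraph {V : Type*} (G : SimpleGraph V) : Prop := ∃ T : SPTree V, RepresentsSP G T

/-- `IsPathT t n` : the sp-tree `t` is a series join of edges forming a path of length `n`. -/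
inductive IsPathT {V : Type*} : SPTree V → ℕ → Prop
  | edge (u v : V) : IsPathT (.edge u v) 1
  | series {l r : SPTree V} {m n : ℕ} : IsPathT l m → IsPathT r n → IsPathT (.series l r) (m + n)

/-- `R₂` : the parallel join of two paths of length 2. -/
def IsR2 {V : Type*} (t : SPTree V) : Prop :=
  ∃ l r : SPTree V, t = .parallel l r ∧ IsPathT l 2 ∧ IsPathT r 2

/-- A pearl: the parallel join of two paths, each of length at least 2. -/
def IsPearl {V : Type*} (t : SPTree V) : Prop :=
  ∃ (l r : SPTree V) (m n : ℕ),
    t = .parallel l r ∧ IsPathT l m ∧ IsPathT r n ∧ 2 ≤ m ∧ 2 ≤ n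

/-- A tail of a pearl-necklace: a series join of single edges and pearls whose last
constituent is a single edge. -/
inductive PearlTail {V : Type*} : SPTree V → Prop
  | base (u v : V) : PearlTail (.edge u v)
  | consEdge (u v : V) {r : SPTree V} : PearlTail r → PearlTail (.series (.edge u v) r)
  | consPearl {p r : SPTree V} : IsPearl p → PearlTail r → PearlTail (.series p r)

/-- A series connection of pearls and at least two single edges, in which the first and
last constituents are single edges. -/
def IsPearlNecklace {V : Type*} (T : SPTree V) : Prop :=
  ∃ (u v : V) (r : SPTree V), T = .series (.edge u v) r ∧ PearlTail r


/-! ### Deletion profiles of two-terminal graphs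

For a two-terminal graph and a set `S` of deleted vertices we record whether the source and the
target are deleted (`i`, `j`), whether the two terminals remain connected (`c`), the number `p` of
remaining components containing no terminal, and the number `q` of deleted inner vertices. -/

/-- A set of deletion profiles `(i, j, c, p, q)`. -/
abbrev Profiles := Bool → Bool → Bool → ℕ → ℕ → Prop

namespace Profiles

/-- Profiles of a series join. -/
def ser (X Y : Profiles) : Profiles := fun i j c p q =>
  ∃ k c₁ p₁ q₁ c₂ p₂ q₂, X i k c₁ p₁ q₁ ∧ Y k j c₂ p₂ q₂ ∧ c = (c₁ && c₂) ∧
    p = p₁ + p₂ + (!(k || c₁ || c₂)).toNat ∧ q = q₁ + q₂ + k.toNat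

/-- Profiles of a parallel join. -/
def par (X Y : Profiles) : Profiles := fun i j c p q =>
  ∃ c₁ p₁ q₁ c₂ p₂ q₂, X i j c₁ p₁ q₁ ∧ Y i j c₂ p₂ q₂ ∧ c = (c₁ || c₂) ∧
    p = p₁ + p₂ ∧ q = q₁ + q₂

/-- Profiles after exchanging the terminals. -/
def rev (X : Profiles) : Profiles := fun i j => X j i

/-- Profiles of a single edge that is present iff `a` holds. -/
def single (a : Bool) : Profiles := fun i j c p q =>
  c = (a && !i && !j) ∧ p = 0 ∧ q = 0

/-- Profiles of the graph with two isolated terminals. -/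
def isolated : Profiles := fun _ _ c p q => c = false ∧ p = 0 ∧ q = 0

/-- Deleted terminals are never connected. -/
def Sound (X : Profiles) : Prop := ∀ i j p q, X i j true p q → i = false ∧ j = false

/-- `X` glued with its environment `O` at both terminals satisfies the `1/2`-toughness bound. -/
def Tough (X O : Profiles) : Prop := ∀ i j c p q c' p' q', X i j c p q → O i j c' p' q' →
  0 < q + q' + i.toNat + j.toNat →
  p + p' + (!i).toNat + (!j).toNat ≤ 2 * (q + q' + i.toNat + j.toNat) + (c || c').toNat

/-- `X` glued with its environment `O` at both terminals violates the `1/2`-toughness bound. -/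
def Violates (X O : Profiles) : Prop := ∃ i j c p q c' p' q', X i j c p q ∧ O i j c' p' q' ∧
  2 * (q + q' + i.toNat + j.toNat) + 1 + (c || c').toNat ≤ p + p' + (!i).toNat + (!j).toNat ∧
  2 + (c || c').toNat ≤ p + p' + (!i).toNat + (!j).toNat

theorem rev_ser (X Y : Profiles) : (X.ser Y).rev = Y.rev.ser X.rev := by
  funext i j c p q
  apply propext
  constructor
  · rintro ⟨k, c₁, p₁, q₁, c₂, p₂, q₂, h₁, h₂, rfl, rfl, rfl⟩
    refine ⟨k, c₂, p₂, q₂, c₁, p₁, q₁, h₂, h₁, Bool.and_comm _ _, ?_, by omega⟩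
    rw [Bool.or_right_comm, add_comm p₁]
  · rintro ⟨k, c₁, p₁, q₁, c₂, p₂, q₂, h₁, h₂, rfl, rfl, rfl⟩
    refine ⟨k, c₂, p₂, q₂, c₁, p₁, q₁, h₂, h₁, Bool.and_comm _ _, ?_, by omega⟩
    rw [Bool.or_right_comm, add_comm p₁]

theorem par_comm (X Y : Profiles) : X.par Y = Y.par X := by
  funext i j c p q
  apply propext
  constructor <;>
  · rintro ⟨c₁, p₁, q₁, c₂, p₂, q₂, h₁, h₂, rfl, rfl, rfl⟩
    exact ⟨c₂, p₂, q₂, c₁, p₁, q₁, h₂, h₁, Bool.or_comm _ _, by omega, by omega⟩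

theorem Sound.rev {X : Profiles} (h : X.Sound) : X.rev.Sound :=
  fun i j p q hx => (h j i p q hx).symm

theorem Sound.src_eq {X : Profiles} (h : X.Sound) {c k : Bool} {p q : ℕ} (hx : X true k c p q) :
    c = false := by
  cases c
  · rfl
  · simpa using (h _ _ _ _ hx).1

theorem Sound.tgt_eq {X : Profiles} (h : X.Sound) {c k : Bool} {p q : ℕ} (hx : X k true c p q) :
    c = false :=
  h.rev.src_eq hx

theorem Sound.ser {X Y : Profiles} (hX : X.Sound) (hY : Y.Sound) : (X.ser Y).Sound := by
  rintro i j p q ⟨k, c₁, p₁, q₁, c₂, p₂, q₂, h₁, h₂, hc, -, -⟩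
  obtain ⟨rfl, rfl⟩ : c₁ = true ∧ c₂ = true := by simpa using hc.symm
  exact ⟨(hX _ _ _ _ h₁).1, (hY _ _ _ _ h₂).2⟩

theorem Sound.par {X Y : Profiles} (hX : X.Sound) (hY : Y.Sound) : (X.par Y).Sound := by
  rintro i j p q ⟨c₁, p₁, q₁, c₂, p₂, q₂, h₁, h₂, hc, -, -⟩
  rcases c₁ with _ | _
  · obtain rfl : c₂ = true := by simpa using hc.symm
    exact hY _ _ _ _ h₂
  · exact hX _ _ _ _ h₁

theorem sound_single (a : Bool) : (single a).Sound := by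
  rintro i j p q ⟨h, -, -⟩
  revert h
  cases a <;> cases i <;> cases j <;> simp

theorem Tough.rev {X O : Profiles} (h : Tough X O) : Tough X.rev O.rev := by
  intro i j c p q c' p' q' hX hO hq
  have := h j i c p q c' p' q' hX hO (by omega)
  omega

/-- The number of terminal components of three vertices joined in a triangle can be computed from
either side. -/
theorem glue_count {i j k cx cy co : Bool} (hx : cx = true → i = false ∧ k = false)
    (hy : cy = true → k = false ∧ j = false) (ho : co = true → i = false ∧ j = false) :
    (!(k || cx || cy)).toNat + (!i).toNat + (!j).toNat + (cx || (co && cy)).toNat =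
      (!(j || co || cy)).toNat + (!i).toNat + (!k).toNat + ((cx && cy) || co).toNat := by
  revert hx hy ho
  cases i <;> cases j <;> cases k <;> cases cx <;> cases cy <;> cases co <;> simp

theorem Tough.ser_left {X Y O : Profiles} (hX : X.Sound) (hY : Y.Sound) (hO : O.Sound)
    (h : Tough (X.ser Y) O) : Tough X (O.ser Y.rev) := by
  rintro i k cx px qx _ _ _ h₁ ⟨j, co, po, qo, cy, py, qy, h₂, h₃, rfl, rfl, rfl⟩ hq
  have hg := glue_count (i := i) (j := j) (k := k) (cx := cx) (cy := cy) (co := co)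
    (by rintro rfl; exact hX _ _ _ _ h₁) (by rintro rfl; exact hY _ _ _ _ h₃)
    (by rintro rfl; exact hO _ _ _ _ h₂)
  have := h i j _ _ _ co po qo ⟨k, cx, px, qx, cy, py, qy, h₁, h₃, rfl, rfl, rfl⟩ h₂ (by omega)
  omega

theorem Violates.ser_left {X Y O : Profiles} (hX : X.Sound) (hY : Y.Sound) (hO : O.Sound)
    (h : Violates (X.ser Y) O) : Violates X (O.ser Y.rev) := by
  obtain ⟨i, j, _, _, _, co, po, qo, ⟨k, cx, px, qx, cy, py, qy, h₁, h₃, rfl, rfl, rfl⟩, h₂, e₁, e₂⟩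
    := h
  have hg := glue_count (i := i) (j := j) (k := k) (cx := cx) (cy := cy) (co := co)
    (by rintro rfl; exact hX _ _ _ _ h₁) (by rintro rfl; exact hY _ _ _ _ h₃)
    (by rintro rfl; exact hO _ _ _ _ h₂)
  exact ⟨i, k, cx, px, qx, _, _, _, h₁, ⟨j, co, po, qo, cy, py, qy, h₂, h₃, rfl, rfl, rfl⟩,
    by omega, by omega⟩

theorem Violates.rev {X O : Profiles} (h : Violates X O) : Violates X.rev O.rev := by
  obtain ⟨i, j, c, p, q, c', p', q', hX, hO, e₁, e₂⟩ := h
  exact ⟨j, i, c, p, q, c', p', q', hX, hO, by omega, by omega⟩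

theorem Tough.ser_right {X Y O : Profiles} (hX : X.Sound) (hY : Y.Sound) (hO : O.Sound)
    (h : Tough (X.ser Y) O) : Tough Y (X.rev.ser O) := by
  have h' := h.rev
  rw [rev_ser] at h'
  have := (h'.ser_left hY.rev hX.rev hO.rev).rev
  rwa [rev_ser] at this

theorem Violates.ser_right {X Y O : Profiles} (hX : X.Sound) (hY : Y.Sound) (hO : O.Sound)
    (h : Violates (X.ser Y) O) : Violates Y (X.rev.ser O) := by
  have h' := h.rev
  rw [rev_ser] at h'
  have := (h'.ser_left hY.rev hX.rev hO.rev).rev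
  rwa [rev_ser] at this

theorem Tough.par_left {X Y O : Profiles} (h : Tough (X.par Y) O) : Tough X (O.par Y) := by
  rintro i j cx px qx _ _ _ h₁ ⟨co, po, qo, cy, py, qy, h₂, h₃, rfl, rfl, rfl⟩ hq
  have := h i j _ _ _ co po qo ⟨cx, px, qx, cy, py, qy, h₁, h₃, rfl, rfl, rfl⟩ h₂ (by omega)
  rw [Bool.or_assoc, Bool.or_comm cy] at this
  omega

theorem Violates.par_left {X Y O : Profiles} (h : Violates (X.par Y) O) :
    Violates X (O.par Y) := by
  obtain ⟨i, j, _, _, _, co, po, qo, ⟨cx, px, qx, cy, py, qy, h₁, h₃, rfl, rfl, rfl⟩, h₂, e₁, e₂⟩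
    := h
  rw [Bool.or_assoc, Bool.or_comm cy] at e₁ e₂
  exact ⟨i, j, cx, px, qx, _, _, _, h₁, ⟨co, po, qo, cy, py, qy, h₂, h₃, rfl, rfl, rfl⟩,
    by omega, by omega⟩

/-- Properties shared by all series-parallel graphs without deleted edges. -/
structure Intact (X : Profiles) : Prop where
  sound : X.Sound
  none : X false false true 0 0
  src : X true false false 0 0
  tgt : X false true false 0 0
  idle : ∀ c p, X false false c p 0 → c = true ∧ p = 0

theorem Intact.rev {X : Profiles} (h : X.Intact) : X.rev.Intact :=
  ⟨h.sound.rev, h.none, h.tgt, h.src, h.idle⟩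

theorem intact_single : (single true).Intact :=
  ⟨sound_single _, by simp [single], by simp [single], by simp [single],
    by rintro c p ⟨h, h', -⟩; simp_all⟩

theorem Intact.ser {X Y : Profiles} (hX : X.Intact) (hY : Y.Intact) : (X.ser Y).Intact := by
  refine ⟨hX.sound.ser hY.sound, ⟨_, _, _, _, _, _, _, hX.none, hY.none, rfl, rfl, rfl⟩,
    ⟨_, _, _, _, _, _, _, hX.src, hY.none, rfl, rfl, rfl⟩,
    ⟨_, _, _, _, _, _, _, hX.none, hY.tgt, rfl, rfl, rfl⟩, ?_⟩
  rintro c p ⟨k, c₁, p₁, q₁, c₂, p₂, q₂, h₁, h₂, rfl, rfl, hq⟩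
  cases k
  · obtain ⟨rfl, rfl⟩ : q₁ = 0 ∧ q₂ = 0 := by simp at hq; omega
    obtain ⟨rfl, rfl⟩ := hX.idle _ _ h₁
    obtain ⟨rfl, rfl⟩ := hY.idle _ _ h₂
    simp
  · simp at hq

theorem Intact.par {X Y : Profiles} (hX : X.Intact) (hY : Y.Intact) : (X.par Y).Intact := by
  refine ⟨hX.sound.par hY.sound, ⟨_, _, _, _, _, _, hX.none, hY.none, rfl, rfl, rfl⟩,
    ⟨_, _, _, _, _, _, hX.src, hY.src, rfl, rfl, rfl⟩,
    ⟨_, _, _, _, _, _, hX.tgt, hY.tgt, rfl, rfl, rfl⟩, ?_⟩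
  rintro c p ⟨c₁, p₁, q₁, c₂, p₂, q₂, h₁, h₂, rfl, rfl, hq⟩
  obtain ⟨rfl, rfl⟩ : q₁ = 0 ∧ q₂ = 0 := by omega
  obtain ⟨rfl, rfl⟩ := hX.idle _ _ h₁
  obtain ⟨rfl, rfl⟩ := hY.idle _ _ h₂
  simp

/-- Deleting both terminals is at least as effective as deleting each of them separately. -/
def Superadd (X : Profiles) : Prop := ∀ f₁ p₁ q₁ f₂ p₂ q₂, X true false f₁ p₁ q₁ →
  X false true f₂ p₂ q₂ → ∃ f p q, X true true f p q ∧ p₁ + p₂ + 2 * q ≤ p + 2 * q₁ + 2 * q₂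

/-- Deleting both terminals is at most as effective as deleting each of them separately. -/
def Subadd (X : Profiles) : Prop := ∀ f p q, X true true f p q → ∃ f₁ p₁ q₁ f₂ p₂ q₂,
  X true false f₁ p₁ q₁ ∧ X false true f₂ p₂ q₂ ∧ p + 2 * q₁ + 2 * q₂ ≤ p₁ + p₂ + 2 * q

theorem Superadd.rev {X : Profiles} (h : X.Superadd) : X.rev.Superadd := by
  intro f₁ p₁ q₁ f₂ p₂ q₂ h₁ h₂
  obtain ⟨f, p, q, hx, e⟩ := h _ _ _ _ _ _ h₂ h₁
  exact ⟨f, p, q, hx, by omega⟩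

theorem Subadd.rev {X : Profiles} (h : X.Subadd) : X.rev.Subadd := by
  intro f p q hx
  obtain ⟨f₁, p₁, q₁, f₂, p₂, q₂, h₁, h₂, e⟩ := h _ _ _ hx
  exact ⟨_, _, _, _, _, _, h₂, h₁, by omega⟩

theorem Superadd.par {X Y : Profiles} (hX : X.Superadd) (hY : Y.Superadd) :
    (X.par Y).Superadd := by
  rintro _ _ _ _ _ _ ⟨c₁, p₁, q₁, c₂, p₂, q₂, h₁, h₂, rfl, rfl, rfl⟩
    ⟨c₃, p₃, q₃, c₄, p₄, q₄, h₃, h₄, rfl, rfl, rfl⟩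
  obtain ⟨f, p, q, hx, e⟩ := hX _ _ _ _ _ _ h₁ h₃
  obtain ⟨f', p', q', hy, e'⟩ := hY _ _ _ _ _ _ h₂ h₄
  exact ⟨_, _, _, ⟨_, _, _, _, _, _, hx, hy, rfl, rfl, rfl⟩, by omega⟩

/-- Separating the terminals costs at least `1`. -/
def Separates (X : Profiles) : Prop := ∀ p q, X false false false p q → p + 1 ≤ 2 * q

theorem Superadd.ser {X Y : Profiles} (hX : X.Superadd) (hY : Y.Superadd)
    (sX : X.Sound) (sY : Y.Sound)
    (dX : ∀ c p q, X false false c p q → p ≤ 2 * q)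
    (dY : ∀ c p q, Y false false c p q → p ≤ 2 * q)
    (hXY : ∀ f p q f' p' q', X false true f p q → Y true false f' p' q' →
      p + p' ≤ 2 * q + 2 * q' + 1)
    (eX : X.Separates ∨ X.Subadd) (eY : Y.Separates) : (X.ser Y).Superadd := by
  rintro _ _ _ _ _ _ ⟨k, c₁, p₁, q₁, c₂, p₂, q₂, h₁, h₂, rfl, rfl, rfl⟩
    ⟨k', c₃, p₃, q₃, c₄, p₄, q₄, h₃, h₄, rfl, rfl, rfl⟩
  have both : ∀ {c p q c' p' q'}, X true true c p q → Y true true c' p' q' →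
      X.ser Y true true false (p + p') (q + q' + 1) := by
    intro c p q c' p' q' h h'
    exact ⟨true, c, p, q, c', p', q', h, h', by simp [sX.src_eq h], by simp, by simp⟩
  have neither : ∀ {c p q c' p' q'}, X true false c p q → Y false true c' p' q' →
      X.ser Y true true false (p + p' + 1) (q + q') := by
    intro c p q c' p' q' h h'
    exact ⟨false, c, p, q, c', p', q', h, h', by simp [sX.src_eq h],
      by simp [sX.src_eq h, sY.tgt_eq h'], by simp⟩
  obtain rfl := sX.src_eq h₁
  obtain rfl := sY.tgt_eq h₄
  rcases k with _ | _ <;> rcases k' with _ | _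
  · -- the middle vertex survives on both sides
    refine ⟨_, _, _, neither h₁ h₄, ?_⟩
    have := dX _ _ _ h₃
    have := dY _ _ _ h₂
    rcases c₂ with _ | _
    · have := eY _ _ h₂
      rcases c₃ with _ | _ <;> simp <;> omega
    · rcases c₃ with _ | _ <;> simp <;> omega
  · obtain rfl := sX.tgt_eq h₃
    obtain ⟨f, p, q, hx, e⟩ := hX _ _ _ _ _ _ h₁ h₃
    refine ⟨_, _, _, both hx h₄, ?_⟩
    have := dY _ _ _ h₂
    rcases c₂ with _ | _
    · have := eY _ _ h₂
      simp; omega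
    · simp; omega
  · obtain rfl := sY.src_eq h₂
    obtain ⟨f, p, q, hy, e⟩ := hY _ _ _ _ _ _ h₂ h₄
    have := dX _ _ _ h₃
    rcases c₃ with _ | _
    · rcases eX with eX | eX
      · have := eX _ _ h₃
        refine ⟨_, _, _, both h₁ hy, ?_⟩
        simp; omega
      · obtain ⟨f₅, p₅, q₅, f₆, p₆, q₆, h₅, h₆, e'⟩ := eX _ _ _ h₁
        have := hXY _ _ _ _ _ _ h₆ h₂
        refine ⟨_, _, _, neither h₅ h₄, ?_⟩
        simp; omega
    · refine ⟨_, _, _, both h₁ hy, ?_⟩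
      simp; omega
  · have := hXY _ _ _ _ _ _ h₃ h₂
    refine ⟨_, _, _, both h₁ h₄, ?_⟩
    simp; omega

/-- Deleting inner vertices that keep the terminals connected costs at least `1`. -/
def Thrifty (X : Profiles) : Prop := ∀ p q, X false false true p q → (p = 0 ∧ q = 0) ∨ p + 1 ≤ 2 * q

/-- What is needed of the rest of a graph around a series-parallel piece: it is either connected or
splits into two sides. -/
structure GoodEnv (O : Profiles) : Prop where
  sound : O.Sound
  idle : ∀ c p, O false false c p 0 → p = 0
  superadd : O.Superadd
  conn_or_split : (O false false true 0 0 ∧ ∀ c p, O false false c p 0 → c = true) ∨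
    (O false false false 0 0 ∧ O.Subadd)

theorem GoodEnv.rev {O : Profiles} (h : O.GoodEnv) : O.rev.GoodEnv :=
  ⟨h.sound.rev, h.idle, h.superadd.rev, h.conn_or_split.imp id fun h' => ⟨h'.1, h'.2.rev⟩⟩

theorem goodEnv_isolated : isolated.GoodEnv := by
  refine ⟨?_, ?_, ?_, Or.inr ⟨⟨rfl, rfl, rfl⟩, ?_⟩⟩
  · rintro i j p q ⟨h, -⟩
    simp at h
  · rintro c p ⟨-, h, -⟩
    exact h
  · rintro _ _ _ _ _ _ ⟨rfl, rfl, rfl⟩ ⟨rfl, rfl, rfl⟩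
    exact ⟨false, 0, 0, ⟨rfl, rfl, rfl⟩, le_rfl⟩
  · rintro _ _ _ ⟨rfl, rfl, rfl⟩
    exact ⟨false, 0, 0, false, 0, 0, ⟨rfl, rfl, rfl⟩, ⟨rfl, rfl, rfl⟩, le_rfl⟩

theorem GoodEnv.exists_none {O : Profiles} (h : O.GoodEnv) : ∃ c, O false false c 0 0 :=
  h.conn_or_split.elim (fun h => ⟨_, h.1⟩) (fun h => ⟨_, h.1⟩)

/-- In a tough graph, an environment loses whenever the terminals are kept. -/
theorem GoodEnv.le {X O : Profiles} (hO : O.GoodEnv) (hX : X.Intact) (h : Tough X O)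
    {c : Bool} {p q : ℕ} (ho : O false false c p q) : (p = 0 ∧ q = 0) ∨ p + 1 ≤ 2 * q := by
  rcases Nat.eq_zero_or_pos q with rfl | hq
  · exact Or.inl ⟨hO.idle _ _ ho, rfl⟩
  · have := h _ _ _ _ _ _ _ _ hX.none ho (by simpa using hq)
    simp at this
    omega

theorem Tough.separates {X O : Profiles} (hX : X.Intact) (hO : O.GoodEnv) (h : Tough X O) :
    X.Separates := by
  intro p q hx
  have hq : 0 < q := by
    rcases Nat.eq_zero_or_pos q with rfl | hq
    · simpa using (hX.idle _ _ hx).1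
    · exact hq
  obtain ⟨c, hc⟩ := hO.exists_none
  have := h _ _ _ _ _ _ _ _ hx hc (by simpa using hq)
  cases c <;> simp at this <;> omega

theorem Tough.thrifty {X O : Profiles} (hX : X.Intact) (hO : O.GoodEnv) (h : Tough X O) :
    X.Thrifty := by
  intro p q hx
  rcases Nat.eq_zero_or_pos q with rfl | hq
  · exact Or.inl ⟨(hX.idle _ _ hx).2, rfl⟩
  · obtain ⟨c, hc⟩ := hO.exists_none
    have := h _ _ _ _ _ _ _ _ hx hc (by simpa using hq)
    simp at this
    omega

theorem Thrifty.le {X : Profiles} (h : X.Thrifty) (h' : X.Separates) {c : Bool} {p q : ℕ}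
    (hx : X false false c p q) : p ≤ 2 * q := by
  cases c
  · have := h' _ _ hx
    omega
  · have := h _ _ hx
    omega

theorem GoodEnv.par {O Y : Profiles} (hO : O.GoodEnv) (hY : Y.Intact) (sY : Y.Superadd) :
    (O.par Y).GoodEnv := by
  have idle : ∀ c p, O.par Y false false c p 0 → c = true ∧ p = 0 := by
    rintro c p ⟨c₁, p₁, q₁, c₂, p₂, q₂, h₁, h₂, rfl, rfl, hq⟩
    obtain ⟨rfl, rfl⟩ : q₁ = 0 ∧ q₂ = 0 := by omega
    obtain rfl := hO.idle _ _ h₁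
    obtain ⟨rfl, rfl⟩ := hY.idle _ _ h₂
    simp
  refine ⟨hO.sound.par hY.sound, fun c p h => (idle c p h).2, hO.superadd.par sY,
    Or.inl ⟨?_, fun c p h => (idle c p h).1⟩⟩
  obtain ⟨c, hc⟩ := hO.exists_none
  exact ⟨_, _, _, _, _, _, hc, hY.none, by simp, rfl, rfl⟩

theorem GoodEnv.ser_left {X Y O : Profiles} (hO : O.GoodEnv) (hX : X.Intact) (hY : Y.Intact)
    (sY : Y.Superadd) (h : Tough (X.ser Y) O) : (O.ser Y.rev).GoodEnv := by
  have hXY := hX.ser hY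
  have tY : Y.Separates := by
    intro p q hy
    exact h.separates hXY hO _ _
      ⟨_, _, _, _, _, _, _, hX.none, hy, rfl, by simp, by simp⟩
  have dY : Y.Thrifty := by
    intro p q hy
    exact h.thrifty hXY hO _ _ ⟨_, _, _, _, _, _, _, hX.none, hy, rfl, by simp, by simp⟩
  have leO : ∀ c p q, O false false c p q → (p = 0 ∧ q = 0) ∨ p + 1 ≤ 2 * q :=
    fun c p q ho => hO.le hXY h ho
  refine ⟨hO.sound.ser hY.sound.rev, ?_, ?_, ?_⟩
  · rintro c p ⟨k, c₁, p₁, q₁, c₂, p₂, q₂, h₁, h₂, rfl, rfl, hq⟩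
    cases k
    · obtain ⟨rfl, rfl⟩ : q₁ = 0 ∧ q₂ = 0 := by simp at hq; omega
      obtain rfl := hO.idle _ _ h₁
      obtain ⟨rfl, rfl⟩ := hY.idle _ _ h₂
      simp
    · simp at hq
  · refine hO.superadd.ser sY.rev hO.sound hY.sound.rev ?_ (fun c p q hy => dY.le tY hy) ?_ ?_
      (fun p q hy => tY p q hy)
    · intro c p q ho
      have := leO _ _ _ ho
      omega
    · intro f p q f' p' q' ho hy
      have := h false true _ _ _ _ _ _
        ⟨false, _, _, _, _, _, _, hX.none, hy, rfl, rfl, rfl⟩ ho (by simp)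
      simp [hO.sound.tgt_eq ho, hY.sound.tgt_eq hy] at this
      omega
    · rcases hO.conn_or_split with ⟨-, hc⟩ | ⟨-, hs⟩
      · left
        intro p q ho
        rcases leO _ _ _ ho with ⟨rfl, rfl⟩ | h'
        · simpa using hc _ _ ho
        · exact h'
      · exact Or.inr hs
  · rcases hO.conn_or_split with ⟨hn, hc⟩ | ⟨hn, hs⟩
    · left
      refine ⟨⟨_, _, _, _, _, _, _, hn, hY.rev.none, rfl, rfl, rfl⟩, ?_⟩
      rintro c p ⟨k, c₁, p₁, q₁, c₂, p₂, q₂, h₁, h₂, rfl, rfl, hq⟩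
      cases k
      · obtain ⟨rfl, rfl⟩ : q₁ = 0 ∧ q₂ = 0 := by simp at hq; omega
        obtain rfl := hc _ _ h₁
        obtain ⟨rfl, rfl⟩ := hY.idle _ _ h₂
        simp
      · simp at hq
    · right
      refine ⟨⟨_, _, _, _, _, _, _, hn, hY.rev.none, rfl, rfl, rfl⟩, ?_⟩
      rintro _ _ _ ⟨k, c₁, p₁, q₁, c₂, p₂, q₂, h₁, h₂, rfl, rfl, rfl⟩
      cases k
      · refine ⟨_, _, _, _, _, _, ⟨_, _, _, _, _, _, _, h₁, hY.rev.none, rfl, rfl, rfl⟩,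
          ⟨_, _, _, _, _, _, _, hn, h₂, rfl, rfl, rfl⟩, ?_⟩
        rcases c₁ with _ | _ <;> rcases c₂ with _ | _ <;> simp <;> omega
      · obtain ⟨f₅, p₅, q₅, f₆, p₆, q₆, h₅, h₆, e⟩ := hs _ _ _ h₁
        refine ⟨_, _, _, _, _, _, ⟨_, _, _, _, _, _, _, h₅, hY.rev.none, rfl, rfl, rfl⟩,
          ⟨_, _, _, _, _, _, _, h₆, h₂, rfl, rfl, rfl⟩, ?_⟩
        simp
        omega

theorem GoodEnv.ser_right {X Y O : Profiles} (hO : O.GoodEnv) (hX : X.Intact) (hY : Y.Intact)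
    (sX : X.Superadd) (h : Tough (X.ser Y) O) : (X.rev.ser O).GoodEnv := by
  have h' := h.rev
  rw [rev_ser] at h'
  have := (hO.rev.ser_left hY.rev hX.rev sX.rev h').rev
  rwa [rev_ser] at this

end Profiles

/-! ### Bounds on profiles -/

namespace Profiles

/-- Upper bounds on `p - 2 * q` for the profiles in `X`, according to the deleted terminals. -/
structure Bounded (X : Profiles) (a b c e : ℤ) : Prop where
  both : ∀ f p q, X true true f p q → (p : ℤ) ≤ 2 * q + a
  src : ∀ f p q, X true false f p q → (p : ℤ) ≤ 2 * q + b
  tgt : ∀ f p q, X false true f p q → (p : ℤ) ≤ 2 * q + c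
  conn : X.Thrifty
  disconn : ∀ p q, X false false false p q → (p : ℤ) ≤ 2 * q + e

/-- Bounds on `p - 2 * q` for the profiles of a path that misses one edge. -/
structure Severed (X : Profiles) (b c : ℤ) : Prop where
  sound : X.Sound
  both : ∀ f p q, X true true f p q → (p : ℤ) ≤ 2 * q + 1
  src : ∀ f p q, X true false f p q → (p : ℤ) ≤ 2 * q + b
  tgt : ∀ f p q, X false true f p q → (p : ℤ) ≤ 2 * q + c
  conn : ∀ p q, ¬ X false false true p q
  disconn : ∀ p q, X false false false p q → (p = 0 ∧ q = 0) ∨ p + 1 ≤ 2 * q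

theorem Bounded.rev {X : Profiles} {a b c e : ℤ} (h : X.Bounded a b c e) :
    X.rev.Bounded a c b e :=
  ⟨h.both, h.tgt, h.src, h.conn, h.disconn⟩

theorem Severed.rev {X : Profiles} {b c : ℤ} (h : X.Severed b c) : X.rev.Severed c b :=
  ⟨h.sound.rev, h.both, h.tgt, h.src, h.conn, h.disconn⟩

theorem Bounded.mono {X : Profiles} {a b c e a' b' c' e' : ℤ} (h : X.Bounded a b c e)
    (ha : a ≤ a') (hb : b ≤ b') (hc : c ≤ c') (he : e ≤ e') : X.Bounded a' b' c' e' :=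
  ⟨fun f p q hx => (h.both f p q hx).trans (by omega),
    fun f p q hx => (h.src f p q hx).trans (by omega),
    fun f p q hx => (h.tgt f p q hx).trans (by omega), h.conn,
    fun p q hx => (h.disconn p q hx).trans (by omega)⟩

theorem bounded_single : (single true).Bounded 1 0 0 (-2) := by
  refine ⟨?_, ?_, ?_, ?_, ?_⟩
  · rintro f p q ⟨-, rfl, rfl⟩; simp
  · rintro f p q ⟨-, rfl, rfl⟩; simp
  · rintro f p q ⟨-, rfl, rfl⟩; simp
  · rintro p q ⟨-, rfl, rfl⟩; simp
  · rintro p q ⟨h, -⟩; simp at h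

theorem severed_single {b c : ℤ} (hb : 0 ≤ b) (hc : 0 ≤ c) : (single false).Severed b c := by
  refine ⟨sound_single _, ?_, ?_, ?_, ?_, ?_⟩
  · rintro f p q ⟨-, rfl, rfl⟩; simp
  · rintro f p q ⟨-, rfl, rfl⟩; simpa
  · rintro f p q ⟨-, rfl, rfl⟩; simpa
  · rintro p q ⟨h, -⟩; simp at h
  · rintro p q ⟨-, rfl, rfl⟩; simp

theorem Bounded.ser {X Y : Profiles} {a b c e a' b' c' e' a₀ b₀ c₀ e₀ : ℤ}
    (hX : X.Bounded a b c e) (hY : Y.Bounded a' b' c' e') (sX : X.Sound)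
    (ha : a + a' - 2 ≤ a₀ ∧ b + c' + 1 ≤ a₀)
    (hb : a + b' - 2 ≤ b₀ ∧ b ≤ b₀ ∧ b + e' + 1 ≤ b₀)
    (hc : c + a' - 2 ≤ c₀ ∧ c' ≤ c₀ ∧ e + c' + 1 ≤ c₀)
    (he : c + b' - 2 ≤ e₀ ∧ e' ≤ e₀ ∧ e ≤ e₀ ∧ e + e' + 1 ≤ e₀) :
    (X.ser Y).Bounded a₀ b₀ c₀ e₀ := by
  refine ⟨?_, ?_, ?_, ?_, ?_⟩
  · rintro f p q ⟨k, c₁, p₁, q₁, c₂, p₂, q₂, h₁, h₂, rfl, rfl, rfl⟩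
    cases k
    · have := hX.src _ _ _ h₁
      have := hY.tgt _ _ _ h₂
      have := Bool.toNat_le (!(false || c₁ || c₂))
      push_cast
      simp only [Bool.toNat_false]
      omega
    · have := hX.both _ _ _ h₁
      have := hY.both _ _ _ h₂
      simp
      omega
  · rintro f p q ⟨k, c₁, p₁, q₁, c₂, p₂, q₂, h₁, h₂, rfl, rfl, rfl⟩
    cases k
    · have := hX.src _ _ _ h₁
      have := Bool.toNat_le (!(false || c₁ || false))
      cases c₂
      · have := hY.disconn _ _ h₂
        push_cast
        simp only [Bool.toNat_false]
        omega
      · have := hY.conn _ _ h₂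
        simp
        omega
    · have := hX.both _ _ _ h₁
      have := hY.src _ _ _ h₂
      simp
      omega
  · rintro f p q ⟨k, c₁, p₁, q₁, c₂, p₂, q₂, h₁, h₂, rfl, rfl, rfl⟩
    cases k
    · have := hY.tgt _ _ _ h₂
      have := Bool.toNat_le (!(false || false || c₂))
      cases c₁
      · have := hX.disconn _ _ h₁
        push_cast
        simp only [Bool.toNat_false]
        omega
      · have := hX.conn _ _ h₁
        simp
        omega
    · have := hX.tgt _ _ _ h₁
      have := hY.both _ _ _ h₂
      simp
      omega
  · rintro p q ⟨k, c₁, p₁, q₁, c₂, p₂, q₂, h₁, h₂, hc, rfl, rfl⟩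
    obtain ⟨rfl, rfl⟩ : c₁ = true ∧ c₂ = true := by simpa using hc.symm
    obtain ⟨-, rfl⟩ := sX _ _ _ _ h₁
    have := hX.conn _ _ h₁
    have := hY.conn _ _ h₂
    simp
    omega
  · rintro p q ⟨k, c₁, p₁, q₁, c₂, p₂, q₂, h₁, h₂, hc, rfl, rfl⟩
    cases k
    · cases c₁ <;> cases c₂
      · have := hX.disconn _ _ h₁
        have := hY.disconn _ _ h₂
        simp
        omega
      · have := hX.disconn _ _ h₁
        have := hY.conn _ _ h₂
        simp
        omega
      · have := hX.conn _ _ h₁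
        have := hY.disconn _ _ h₂
        simp
        omega
      · simp at hc
    · have := hX.tgt _ _ _ h₁
      have := hY.src _ _ _ h₂
      simp
      omega

theorem Severed.ser_left {X Y : Profiles} (hX : X.Severed 0 1) (hY : Y.Bounded 1 0 0 (-2))
    (sY : Y.Sound) : (X.ser Y).Severed 0 1 := by
  refine ⟨hX.sound.ser sY, ?_, ?_, ?_, ?_, ?_⟩
  · rintro f p q ⟨k, c₁, p₁, q₁, c₂, p₂, q₂, h₁, h₂, rfl, rfl, rfl⟩
    cases k
    · have := hX.src _ _ _ h₁
      have := hY.tgt _ _ _ h₂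
      have := Bool.toNat_le (!(false || c₁ || c₂))
      push_cast
      simp only [Bool.toNat_false]
      omega
    · have := hX.both _ _ _ h₁
      have := hY.both _ _ _ h₂
      simp
      omega
  · rintro f p q ⟨k, c₁, p₁, q₁, c₂, p₂, q₂, h₁, h₂, rfl, rfl, rfl⟩
    cases k
    · have := hX.src _ _ _ h₁
      have := Bool.toNat_le (!(false || c₁ || false))
      cases c₂
      · have := hY.disconn _ _ h₂
        push_cast
        simp only [Bool.toNat_false]
        omega
      · have := hY.conn _ _ h₂
        simp
        omega
    · have := hX.both _ _ _ h₁
      have := hY.src _ _ _ h₂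
      simp
      omega
  · rintro f p q ⟨k, c₁, p₁, q₁, c₂, p₂, q₂, h₁, h₂, rfl, rfl, rfl⟩
    cases k
    · have := hY.tgt _ _ _ h₂
      have := Bool.toNat_le (!(false || false || c₂))
      cases c₁
      · have := hX.disconn _ _ h₁
        push_cast
        simp only [Bool.toNat_false]
        omega
      · exact (hX.conn _ _ h₁).elim
    · have := hX.tgt _ _ _ h₁
      have := hY.both _ _ _ h₂
      simp
      omega
  · rintro p q ⟨k, c₁, p₁, q₁, c₂, p₂, q₂, h₁, h₂, hc, rfl, rfl⟩
    obtain ⟨rfl, rfl⟩ : c₁ = true ∧ c₂ = true := by simpa using hc.symm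
    obtain ⟨-, rfl⟩ := hX.sound _ _ _ _ h₁
    exact hX.conn _ _ h₁
  · rintro p q ⟨k, c₁, p₁, q₁, c₂, p₂, q₂, h₁, h₂, hc, rfl, rfl⟩
    cases k
    · cases c₁ <;> cases c₂
      · have := hX.disconn _ _ h₁
        have := hY.disconn _ _ h₂
        simp
        omega
      · have := hX.disconn _ _ h₁
        have := hY.conn _ _ h₂
        simp
        omega
      · exact (hX.conn _ _ h₁).elim
      · simp at hc
    · have := hX.tgt _ _ _ h₁
      have := hY.src _ _ _ h₂
      simp
      omega

theorem Severed.ser_right {X Y : Profiles} (hX : X.Bounded 1 0 0 (-2)) (hY : Y.Severed 1 0)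
    (sX : X.Sound) : (X.ser Y).Severed 1 0 := by
  have := (hY.rev.ser_left hX.rev sX.rev).rev
  rwa [rev_ser] at this

theorem Bounded.par {X Y : Profiles} (hX : X.Bounded 1 0 0 (-2)) (hY : Y.Bounded 1 0 0 (-2)) :
    (X.par Y).Bounded 2 0 0 (-2) := by
  refine ⟨?_, ?_, ?_, ?_, ?_⟩
  · rintro f p q ⟨c₁, p₁, q₁, c₂, p₂, q₂, h₁, h₂, -, rfl, rfl⟩
    have := hX.both _ _ _ h₁
    have := hY.both _ _ _ h₂
    omega
  · rintro f p q ⟨c₁, p₁, q₁, c₂, p₂, q₂, h₁, h₂, -, rfl, rfl⟩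
    have := hX.src _ _ _ h₁
    have := hY.src _ _ _ h₂
    omega
  · rintro f p q ⟨c₁, p₁, q₁, c₂, p₂, q₂, h₁, h₂, -, rfl, rfl⟩
    have := hX.tgt _ _ _ h₁
    have := hY.tgt _ _ _ h₂
    omega
  · rintro p q ⟨c₁, p₁, q₁, c₂, p₂, q₂, h₁, h₂, hc, rfl, rfl⟩
    cases c₁ <;> cases c₂
    · simp at hc
    · have := hX.disconn _ _ h₁
      have := hY.conn _ _ h₂
      omega
    · have := hX.conn _ _ h₁
      have := hY.disconn _ _ h₂
      omega
    · have := hX.conn _ _ h₁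
      have := hY.conn _ _ h₂
      omega
  · rintro p q ⟨c₁, p₁, q₁, c₂, p₂, q₂, h₁, h₂, hc, rfl, rfl⟩
    obtain ⟨rfl, rfl⟩ : c₁ = false ∧ c₂ = false := by simpa using hc.symm
    have := hX.disconn _ _ h₁
    have := hY.disconn _ _ h₂
    omega

theorem Severed.par {X Y : Profiles} {b c : ℤ} (hX : X.Severed b c)
    (hY : Y.Bounded 1 0 0 (-2)) : (X.par Y).Bounded 2 b c (-2) := by
  refine ⟨?_, ?_, ?_, ?_, ?_⟩
  · rintro f p q ⟨c₁, p₁, q₁, c₂, p₂, q₂, h₁, h₂, -, rfl, rfl⟩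
    have := hX.both _ _ _ h₁
    have := hY.both _ _ _ h₂
    omega
  · rintro f p q ⟨c₁, p₁, q₁, c₂, p₂, q₂, h₁, h₂, -, rfl, rfl⟩
    have := hX.src _ _ _ h₁
    have := hY.src _ _ _ h₂
    omega
  · rintro f p q ⟨c₁, p₁, q₁, c₂, p₂, q₂, h₁, h₂, -, rfl, rfl⟩
    have := hX.tgt _ _ _ h₁
    have := hY.tgt _ _ _ h₂
    omega
  · rintro p q ⟨c₁, p₁, q₁, c₂, p₂, q₂, h₁, h₂, hc, rfl, rfl⟩
    cases c₁
    · obtain rfl : c₂ = true := by simpa using hc.symm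
      have := hX.disconn _ _ h₁
      have := hY.conn _ _ h₂
      omega
    · exact (hX.conn _ _ h₁).elim
  · rintro p q ⟨c₁, p₁, q₁, c₂, p₂, q₂, h₁, h₂, hc, rfl, rfl⟩
    obtain ⟨rfl, rfl⟩ : c₁ = false ∧ c₂ = false := by simpa using hc.symm
    have := hX.disconn _ _ h₁
    have := hY.disconn _ _ h₂
    omega

/-- Deleting both terminals (and possibly inner vertices) gains at least `n`. -/
def HasGain (X : Profiles) (n : ℕ) : Prop := ∃ f p q, X true true f p q ∧ 2 * q + n ≤ p

theorem Intact.hasGain_ser {X Y : Profiles} (hX : X.Intact) (hY : Y.Intact) :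
    (X.ser Y).HasGain 1 :=
  ⟨_, _, _, ⟨_, _, _, _, _, _, _, hX.src, hY.tgt, rfl, rfl, rfl⟩, by simp⟩

theorem HasGain.ser {X Y : Profiles} (hX : X.HasGain 2) (hY : Y.HasGain 2) :
    (X.ser Y).HasGain 2 := by
  obtain ⟨f, p, q, h, e⟩ := hX
  obtain ⟨f', p', q', h', e'⟩ := hY
  exact ⟨_, _, _, ⟨_, _, _, _, _, _, _, h, h', rfl, rfl, rfl⟩, by simp; omega⟩

theorem HasGain.par {X Y : Profiles} {m n : ℕ} (hX : X.HasGain m) (hY : Y.HasGain n) :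
    (X.par Y).HasGain (m + n) := by
  obtain ⟨f, p, q, h, e⟩ := hX
  obtain ⟨f', p', q', h', e'⟩ := hY
  exact ⟨_, _, _, ⟨_, _, _, _, _, _, h, h', rfl, rfl, rfl⟩, by omega⟩

theorem HasGain.mono {X : Profiles} {m n : ℕ} (hX : X.HasGain n) (h : m ≤ n) : X.HasGain m := by
  obtain ⟨f, p, q, hx, e⟩ := hX
  exact ⟨f, p, q, hx, by omega⟩

/-- If the bounds on a modification `X'` of `X` are close to those of `X`, a violation of toughness
can only come from an environment that gains by the deletion of one terminal. -/
theorem Violates.exists_gain {X X' O : Profiles} {n : ℕ} {b c : ℤ} (hX : X.Intact)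
    (hO : O.GoodEnv) (h : Tough X O) (hn : X.HasGain n) (hX' : X'.Bounded n b c (-1))
    (sep : ∀ p q, O false false false p q → p + 2 ≤ 2 * q) (hv : Violates X' O) :
    (∃ f p q, O true false f p q ∧ 2 * (q : ℤ) + 2 ≤ p + b) ∨
      ∃ f p q, O false true f p q ∧ 2 * (q : ℤ) + 2 ≤ p + c := by
  obtain ⟨i, j, c₁, p₁, q₁, c₂, p₂, q₂, h₁, h₂, e₁, e₂⟩ := hv
  rcases i with _ | _ <;> rcases j with _ | _
  · exfalso
    have h₃ := hO.le hX h h₂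
    rcases c₁ with _ | _
    · have := hX'.disconn _ _ h₁
      rcases c₂ with _ | _
      · have := sep _ _ h₂
        simp at e₁ e₂
        omega
      · simp at e₁ e₂
        omega
    · have := hX'.conn _ _ h₁
      simp at e₁ e₂
      omega
  · right
    refine ⟨_, _, _, h₂, ?_⟩
    have := hX'.tgt _ _ _ h₁
    simp at e₁
    omega
  · left
    refine ⟨_, _, _, h₂, ?_⟩
    have := hX'.src _ _ _ h₁
    simp at e₁
    omega
  · exfalso
    have := hX'.both _ _ _ h₁
    obtain ⟨f, p, q, hx, e⟩ := hn
    have := h _ _ _ _ _ _ _ _ hx h₂ (by simp)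
    obtain rfl := hX.sound.src_eq hx
    obtain rfl := hO.sound.src_eq h₂
    simp at this e₁
    omega

/-- Outside a tough intact graph, the deletion of a single terminal gains at most `1`. -/
theorem Tough.src_le {X O : Profiles} (hX : X.Intact) (hO : O.Sound) (h : Tough X O)
    {f : Bool} {p q : ℕ} (ho : O true false f p q) : p ≤ 2 * q + 1 := by
  have := h _ _ _ _ _ _ _ _ hX.src ho (by simp)
  obtain rfl := hO.src_eq ho
  simp at this
  omega

theorem Tough.tgt_le {X O : Profiles} (hX : X.Intact) (hO : O.Sound) (h : Tough X O)
    {f : Bool} {p q : ℕ} (ho : O false true f p q) : p ≤ 2 * q + 1 :=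
  h.rev.src_le hX.rev hO.rev ho

theorem not_violates_of_bounded {X X' O : Profiles} (hX : X.Intact)
    (hO : O.GoodEnv) (h : Tough X O) (hn : X.HasGain 1) (hX' : X'.Bounded 1 0 0 (-1))
    (sep : ∀ p q, O false false false p q → p + 2 ≤ 2 * q) : ¬ Violates X' O := by
  intro hv
  rcases hv.exists_gain hX hO h hn (by simpa using hX') sep with ⟨f, p, q, ho, e⟩ | ⟨f, p, q, ho, e⟩
  · have := h.src_le hX hO.sound ho
    omega
  · have := h.tgt_le hX hO.sound ho
    omega

theorem not_violates_single {O : Profiles} (hO : O.GoodEnv) (h : Tough (single true) O)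
    (sep : ∀ p q, O false false false p q → p + 2 ≤ 2 * q) : ¬ Violates (single false) O := by
  rintro ⟨i, j, c₁, p₁, q₁, c₂, p₂, q₂, ⟨rfl, rfl, rfl⟩, h₂, e₁, e₂⟩
  have h₃ := h i j _ _ _ _ _ _ ⟨rfl, rfl, rfl⟩ h₂
  rcases i with _ | _ <;> rcases j with _ | _
  · have := hO.le intact_single h h₂
    rcases c₂ with _ | _
    · have := sep _ _ h₂
      simp at e₁ e₂
      omega
    · simp at e₁ e₂
      omega
  all_goals simp at h₃ e₁; omega

/-- A chain of pearls cannot be parallel to anything but an edge. -/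
theorem not_violates_par {X X₁ X₂ Y O : Profiles} (hX : X.Intact) (hY : Y.Intact)
    (hO : O.GoodEnv) (hOY : (O.par Y).GoodEnv) (h : Tough (X.par Y) O) (hn : X.HasGain 2)
    (hn' : Y.HasGain 1)
    (hX₁ : X₁.Bounded 2 0 1 (-1)) (hX₂ : X₂.Bounded 2 1 0 (-1))
    (bY : Y.Bounded 2 0 0 (-2))
    (sep : ∀ p q, O.par Y false false false p q → p + 2 ≤ 2 * q)
    (h₁ : Violates X₁ (O.par Y)) : ¬ Violates X₂ (O.par Y) := by
  intro h₂
  have t := h.par_left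
  obtain ⟨f, p, q, ho, e⟩ : ∃ f p q, O false true f p q ∧ 2 * q + 1 ≤ p := by
    rcases h₁.exists_gain hX hOY t hn (by simpa using hX₁) sep with
      ⟨f, p, q, ho, e⟩ | ⟨f, p, q, ⟨c₁, p₁, q₁, c₂, p₂, q₂, ho, hy, -, rfl, rfl⟩, e⟩
    · have := t.src_le hX hOY.sound ho
      omega
    · have := bY.tgt _ _ _ hy
      exact ⟨_, _, _, ho, by omega⟩
  obtain ⟨f', p', q', ho', e'⟩ : ∃ f p q, O true false f p q ∧ 2 * q + 1 ≤ p := by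
    rcases h₂.exists_gain hX hOY t hn (by simpa using hX₂) sep with
      ⟨f, p, q, ⟨c₁, p₁, q₁, c₂, p₂, q₂, ho, hy, -, rfl, rfl⟩, e⟩ | ⟨f, p, q, ho, e⟩
    · have := bY.src _ _ _ hy
      exact ⟨_, _, _, ho, by omega⟩
    · have := t.tgt_le hX hOY.sound ho
      omega
  obtain ⟨f₀, p₀, q₀, ho₀, e₀⟩ := hO.superadd _ _ _ _ _ _ ho' ho
  obtain ⟨f₁, p₁, q₁, hxy, e₁⟩ := hn.par hn'
  have := h _ _ _ _ _ _ _ _ hxy ho₀ (by simp)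
  obtain rfl := (hX.par hY).sound.src_eq hxy
  obtain rfl := hO.sound.src_eq ho₀
  simp at this
  omega

end Profiles

/-! ### Profiles of series-parallel trees -/

namespace SPTree

variable {V : Type*}

open Classical in
/-- The deletion profiles of the graph of `T` without the edges in `F`. -/
noncomputable def profiles (F : Set (Sym2 V)) : SPTree V → Profiles
  | edge u v => Profiles.single (decide (s(u, v) ∉ F))
  | series l r => (l.profiles F).ser (r.profiles F)
  | parallel l r => (l.profiles F).par (r.profiles F)

theorem profiles_congr {F F' : Set (Sym2 V)} {T : SPTree V}
    (h : ∀ e ∈ T.edges, e ∈ F ↔ e ∈ F') : T.profiles F = T.profiles F' := by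
  induction T with
  | edge u v =>
    rw [profiles, profiles, decide_eq_decide.2 (not_congr (h s(u, v) rfl))]
  | series l r hl hr | parallel l r hl hr =>
    rw [profiles, profiles, hl fun e he => h e (Or.inl he), hr fun e he => h e (Or.inr he)]

theorem profiles_singleton {e : Sym2 V} {T : SPTree V} (h : e ∉ T.edges) :
    T.profiles {e} = T.profiles ∅ :=
  profiles_congr fun e' he' => by
    simp only [Set.mem_singleton_iff, Set.mem_empty_iff_false, iff_false]
    rintro rfl
    exact h he'

theorem sound_profiles (F : Set (Sym2 V)) (T : SPTree V) : (T.profiles F).Sound := by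
  induction T with
  | edge u v => exact Profiles.sound_single _
  | series l r hl hr => exact hl.ser hr
  | parallel l r hl hr => exact hl.par hr

theorem profiles_edge_empty (u v : V) : (edge u v).profiles ∅ = Profiles.single true := by
  simp [profiles]

theorem profiles_edge_singleton (u v : V) :
    (edge u v).profiles {s(u, v)} = Profiles.single false := by
  simp [profiles]

theorem intact_profiles (T : SPTree V) : (T.profiles ∅).Intact := by
  induction T with
  | edge u v => simpa only [profiles_edge_empty] using Profiles.intact_single
  | series l r hl hr => exact hl.ser hr
  | parallel l r hl hr => exact hl.par hr

theorem superadd_profiles {T : SPTree V} (hs : (T.profiles ∅).Separates)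
    (ht : (T.profiles ∅).Thrifty) : (T.profiles ∅).Superadd := by
  induction T with
  | edge u v =>
    rw [profiles_edge_empty]
    rintro _ _ _ _ _ _ ⟨-, rfl, rfl⟩ ⟨-, rfl, rfl⟩
    exact ⟨false, 0, 0, ⟨rfl, rfl, rfl⟩, le_rfl⟩
  | series l r hl hr =>
    have il := l.intact_profiles
    have ir := r.intact_profiles
    have sl : (l.profiles ∅).Separates := fun p q h =>
      hs p q ⟨_, _, _, _, _, _, _, h, ir.none, rfl, by simp, by simp⟩
    have sr : (r.profiles ∅).Separates := fun p q h =>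
      hs p q ⟨_, _, _, _, _, _, _, il.none, h, rfl, by simp, by simp⟩
    have tl : (l.profiles ∅).Thrifty := fun p q h =>
      ht p q ⟨_, _, _, _, _, _, _, h, ir.none, rfl, by simp, by simp⟩
    have tr : (r.profiles ∅).Thrifty := fun p q h =>
      ht p q ⟨_, _, _, _, _, _, _, il.none, h, rfl, by simp, by simp⟩
    refine (hl sl tl).ser (hr sr tr) il.sound ir.sound (fun c p q h => tl.le sl h)
      (fun c p q h => tr.le sr h) ?_ (Or.inl sl) sr
    intro f p q f' p' q' h h'
    have := hs _ _ ⟨true, _, _, _, _, _, _, h, h', by simp [il.sound.tgt_eq h], rfl, rfl⟩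
    simp at this
    omega
  | parallel l r hl hr =>
    have il := l.intact_profiles
    have ir := r.intact_profiles
    have sl : (l.profiles ∅).Separates := by
      intro p q h
      rcases ht p q ⟨_, _, _, _, _, _, h, ir.none, rfl, by simp, by simp⟩ with ⟨rfl, rfl⟩ | h'
      · simpa using (il.idle _ _ h).1
      · exact h'
    have sr : (r.profiles ∅).Separates := by
      intro p q h
      rcases ht p q ⟨_, _, _, _, _, _, il.none, h, rfl, by simp, by simp⟩ with ⟨rfl, rfl⟩ | h'
      · simpa using (ir.idle _ _ h).1
      · exact h'
    exact (hl sl fun p q h => ht p q ⟨_, _, _, _, _, _, h, ir.none, rfl, by simp, by simp⟩).par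
      (hr sr fun p q h => ht p q ⟨_, _, _, _, _, _, il.none, h, rfl, by simp, by simp⟩)

theorem src_mem_verts (T : SPTree V) : T.src ∈ T.verts := by
  induction T with
  | edge u v => exact Or.inl rfl
  | series l r hl hr | parallel l r hl hr => exact Or.inl hl

theorem tgt_mem_verts (T : SPTree V) : T.tgt ∈ T.verts := by
  induction T with
  | edge u v => exact Or.inr rfl
  | series l r hl hr => exact Or.inr hr
  | parallel l r hl hr => exact Or.inl hl

theorem mem_verts_of_mem_edges {T : SPTree V} {e : Sym2 V} (he : e ∈ T.edges) {x : V}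
    (hx : x ∈ e) : x ∈ T.verts := by
  induction T with
  | edge u v =>
    obtain rfl : e = s(u, v) := he
    simpa [verts] using hx
  | series l r hl hr | parallel l r hl hr => exact he.imp (fun h => hl h) (fun h => hr h)

theorem WF.src_ne_tgt {T : SPTree V} (h : T.WF) : T.src ≠ T.tgt := by
  induction T with
  | edge u v => exact h
  | series l r hl hr =>
    intro he
    have : l.src ∈ l.verts ∩ r.verts := ⟨l.src_mem_verts, he ▸ r.tgt_mem_verts⟩
    rw [h.2.2.2] at this
    exact hl h.1 this
  | parallel l r hl hr => exact hl h.1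

theorem WF.not_isDiag {T : SPTree V} (h : T.WF) {e : Sym2 V} (he : e ∈ T.edges) :
    ¬ e.IsDiag := by
  induction T with
  | edge u v =>
    obtain rfl : e = s(u, v) := he
    rw [Sym2.mk_isDiag_iff]
    exact h
  | series l r hl hr | parallel l r hl hr => exact he.elim (hl h.1) (hr h.2.1)

theorem WF.disjoint_edges {l r : SPTree V} (h : (series l r).WF) : Disjoint l.edges r.edges := by
  rw [Set.disjoint_left]
  intro e hl hr
  have mem : ∀ x ∈ e, x = l.tgt := by
    intro x hx
    have : x ∈ l.verts ∩ r.verts := ⟨mem_verts_of_mem_edges hl hx, mem_verts_of_mem_edges hr hx⟩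
    rwa [h.2.2.2] at this
  refine h.1.not_isDiag hl ?_
  induction e with
  | h x y =>
    rw [Sym2.mk_isDiag_iff, mem x (by simp), mem y (by simp)]

theorem WF.profiles_series_left {l r : SPTree V} (h : (series l r).WF) {e : Sym2 V}
    (he : e ∈ l.edges) :
    (series l r).profiles {e} = (l.profiles {e}).ser (r.profiles ∅) := by
  rw [profiles, profiles_singleton (Set.disjoint_left.1 h.disjoint_edges he)]

theorem WF.profiles_series_right {l r : SPTree V} (h : (series l r).WF) {e : Sym2 V}
    (he : e ∈ r.edges) :
    (series l r).profiles {e} = (l.profiles ∅).ser (r.profiles {e}) := by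
  rw [profiles, profiles_singleton (Set.disjoint_right.1 h.disjoint_edges he)]

theorem WF.profiles_parallel_left {l r : SPTree V} (h : (parallel l r).WF) {e : Sym2 V}
    (he : e ∈ l.edges) :
    (parallel l r).profiles {e} = (l.profiles {e}).par (r.profiles ∅) := by
  rw [profiles, profiles_singleton (Set.disjoint_left.1 h.2.2.2.2.2 he)]

theorem WF.profiles_parallel_right {l r : SPTree V} (h : (parallel l r).WF) {e : Sym2 V}
    (he : e ∈ r.edges) :
    (parallel l r).profiles {e} = (l.profiles ∅).par (r.profiles {e}) := by
  rw [profiles, profiles_singleton (Set.disjoint_right.1 h.2.2.2.2.2 he)]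

end SPTree

/-! ### Chains of edges and pearls -/

/-- A series connection, bracketed arbitrarily, of single edges and pearls. -/
inductive IsPearlChain {V : Type*} : SPTree V → Prop
  | edge (u v : V) : IsPearlChain (.edge u v)
  | pearl {p : SPTree V} : IsPearl p → IsPearlChain p
  | series {l r : SPTree V} : IsPearlChain l → IsPearlChain r → IsPearlChain (.series l r)

section Chains

variable {V : Type*} {T l r : SPTree V} {n : ℕ}

theorem IsPathT.pos (h : IsPathT T n) : 1 ≤ n := by
  induction h with
  | edge u v => exact le_rfl
  | series _ _ h₁ h₂ => omega

theorem IsPathT.bounded (h : IsPathT T n) : (T.profiles ∅).Bounded 1 0 0 (-2) := by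
  induction h with
  | edge u v => simpa only [SPTree.profiles_edge_empty] using Profiles.bounded_single
  | series _ _ h₁ h₂ =>
    exact h₁.ser h₂ (SPTree.sound_profiles _ _) (by norm_num) (by norm_num) (by norm_num)
      (by norm_num)

theorem IsPathT.hasGain (h : IsPathT T n) (hn : 2 ≤ n) : (T.profiles ∅).HasGain 1 := by
  cases h with
  | edge u v => omega
  | series _ _ => exact (SPTree.intact_profiles _).hasGain_ser (SPTree.intact_profiles _)

theorem IsPathT.exists_severed_src (h : IsPathT T n) (hT : T.WF) :
    ∃ e ∈ T.edges, (T.profiles {e}).Severed 0 1 := by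
  induction h with
  | edge u v =>
    refine ⟨s(u, v), rfl, ?_⟩
    rw [SPTree.profiles_edge_singleton]
    exact Profiles.severed_single le_rfl zero_le_one
  | series _ hr ih _ =>
    obtain ⟨e, he, h⟩ := ih hT.1
    refine ⟨e, Or.inl he, ?_⟩
    rw [hT.profiles_series_left he]
    exact h.ser_left hr.bounded (SPTree.sound_profiles _ _)

theorem IsPathT.exists_severed_tgt (h : IsPathT T n) (hT : T.WF) :
    ∃ e ∈ T.edges, (T.profiles {e}).Severed 1 0 := by
  induction h with
  | edge u v =>
    refine ⟨s(u, v), rfl, ?_⟩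
    rw [SPTree.profiles_edge_singleton]
    exact Profiles.severed_single zero_le_one le_rfl
  | series hl _ _ ih =>
    obtain ⟨e, he, h⟩ := ih hT.2.1
    refine ⟨e, Or.inr he, ?_⟩
    rw [hT.profiles_series_right he]
    exact Profiles.Severed.ser_right hl.bounded h (SPTree.sound_profiles _ _)

theorem IsPearl.bounded (h : IsPearl T) : (T.profiles ∅).Bounded 2 0 0 (-2) := by
  obtain ⟨l, r, m, n, rfl, hl, hr, -, -⟩ := h
  exact hl.bounded.par hr.bounded

theorem IsPearl.hasGain (h : IsPearl T) : (T.profiles ∅).HasGain 2 := by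
  obtain ⟨l, r, m, n, rfl, hl, hr, hm, hn⟩ := h
  exact (hl.hasGain hm).par (hr.hasGain hn)

theorem IsPearl.exists_bounded_src (h : IsPearl T) (hT : T.WF) :
    ∃ e ∈ T.edges, (T.profiles {e}).Bounded 2 0 1 (-2) := by
  obtain ⟨l, r, m, n, rfl, hl, hr, hm, hn⟩ := h
  obtain ⟨e, he, h⟩ := hl.exists_severed_src hT.1
  exact ⟨e, Or.inl he, hT.profiles_parallel_left he ▸ h.par hr.bounded⟩

theorem IsPearl.exists_bounded_tgt (h : IsPearl T) (hT : T.WF) :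
    ∃ e ∈ T.edges, (T.profiles {e}).Bounded 2 1 0 (-2) := by
  obtain ⟨l, r, m, n, rfl, hl, hr, hm, hn⟩ := h
  obtain ⟨e, he, h⟩ := hl.exists_severed_tgt hT.1
  exact ⟨e, Or.inl he, hT.profiles_parallel_left he ▸ h.par hr.bounded⟩

theorem IsPearlChain.bounded (h : IsPearlChain T) : (T.profiles ∅).Bounded 2 0 0 (-2) := by
  induction h with
  | edge u v =>
    rw [SPTree.profiles_edge_empty]
    exact Profiles.bounded_single.mono (by norm_num) le_rfl le_rfl le_rfl
  | pearl hp => exact hp.bounded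
  | series _ _ h₁ h₂ =>
    exact h₁.ser h₂ (SPTree.sound_profiles _ _) (by norm_num) (by norm_num) (by norm_num)
      (by norm_num)

theorem IsPearlChain.eq_edge_or_hasGain (h : IsPearlChain T) :
    (∃ u v, T = .edge u v) ∨ (T.profiles ∅).HasGain 1 := by
  cases h with
  | edge u v => exact Or.inl ⟨u, v, rfl⟩
  | pearl hp => exact Or.inr (hp.hasGain.mono one_le_two)
  | series _ _ =>
    exact Or.inr ((SPTree.intact_profiles _).hasGain_ser (SPTree.intact_profiles _))

/-- A chain with both an edge and a pearl contains an edge whose deletion has little effect, and a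
chain of pearls contains two edges whose deletion has an effect at one terminal only. -/
theorem IsPearlChain.path_or_bounded (h : IsPearlChain T) (hT : T.WF) : (∃ n, IsPathT T n) ∨
    (∃ e ∈ T.edges, (T.profiles {e}).Bounded 1 0 0 (-1)) ∨
    ((T.profiles ∅).HasGain 2 ∧ (∃ e ∈ T.edges, (T.profiles {e}).Bounded 2 0 1 (-1)) ∧
      ∃ e ∈ T.edges, (T.profiles {e}).Bounded 2 1 0 (-1)) := by
  induction h with
  | edge u v => exact Or.inl ⟨_, .edge u v⟩
  | pearl hp =>
    obtain ⟨e, he, h⟩ := hp.exists_bounded_src hT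
    obtain ⟨e', he', h'⟩ := hp.exists_bounded_tgt hT
    exact Or.inr (Or.inr ⟨hp.hasGain, ⟨e, he, h.mono le_rfl le_rfl le_rfl (by norm_num)⟩,
      ⟨e', he', h'.mono le_rfl le_rfl le_rfl (by norm_num)⟩⟩)
  | @series l r hl hr ihl ihr =>
    have left : ∀ {a b c e a' b' c' e' a₀ b₀ c₀ e₀ : ℤ},
        (∃ x ∈ l.edges, (l.profiles {x}).Bounded a b c e) →
        (r.profiles ∅).Bounded a' b' c' e' → (a + a' - 2 ≤ a₀ ∧ b + c' + 1 ≤ a₀) →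
        (a + b' - 2 ≤ b₀ ∧ b ≤ b₀ ∧ b + e' + 1 ≤ b₀) →
        (c + a' - 2 ≤ c₀ ∧ c' ≤ c₀ ∧ e + c' + 1 ≤ c₀) →
        (c + b' - 2 ≤ e₀ ∧ e' ≤ e₀ ∧ e ≤ e₀ ∧ e + e' + 1 ≤ e₀) →
        ∃ x ∈ (SPTree.series l r).edges,
          ((SPTree.series l r).profiles {x}).Bounded a₀ b₀ c₀ e₀ := by
      rintro a b c e a' b' c' e' a₀ b₀ c₀ e₀ ⟨x, hx, h⟩ h' ha hb hc he
      refine ⟨x, Or.inl hx, ?_⟩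
      rw [hT.profiles_series_left hx]
      exact h.ser h' (SPTree.sound_profiles _ _) ha hb hc he
    have right : ∀ {a b c e a' b' c' e' a₀ b₀ c₀ e₀ : ℤ},
        (l.profiles ∅).Bounded a b c e →
        (∃ x ∈ r.edges, (r.profiles {x}).Bounded a' b' c' e') →
        (a + a' - 2 ≤ a₀ ∧ b + c' + 1 ≤ a₀) →
        (a + b' - 2 ≤ b₀ ∧ b ≤ b₀ ∧ b + e' + 1 ≤ b₀) →
        (c + a' - 2 ≤ c₀ ∧ c' ≤ c₀ ∧ e + c' + 1 ≤ c₀) →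
        (c + b' - 2 ≤ e₀ ∧ e' ≤ e₀ ∧ e ≤ e₀ ∧ e + e' + 1 ≤ e₀) →
        ∃ x ∈ (SPTree.series l r).edges,
          ((SPTree.series l r).profiles {x}).Bounded a₀ b₀ c₀ e₀ := by
      rintro a b c e a' b' c' e' a₀ b₀ c₀ e₀ h ⟨x, hx, h'⟩ ha hb hc he
      refine ⟨x, Or.inr hx, ?_⟩
      rw [hT.profiles_series_right hx]
      exact h.ser h' (SPTree.sound_profiles _ _) ha hb hc he
    rcases ihl hT.1 with ⟨m, pl⟩ | gl | ⟨gl, xl, yl⟩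
    · rcases ihr hT.2.1 with ⟨n, pr⟩ | gr | ⟨gr, xr, yr⟩
      · exact Or.inl ⟨_, pl.series pr⟩
      · exact Or.inr (Or.inl (right pl.bounded gr (by norm_num) (by norm_num) (by norm_num)
          (by norm_num)))
      · exact Or.inr (Or.inl (right pl.bounded yr (by norm_num) (by norm_num) (by norm_num)
          (by norm_num)))
    · exact Or.inr (Or.inl (left gl hr.bounded (by norm_num) (by norm_num) (by norm_num)
          (by norm_num)))
    · rcases ihr hT.2.1 with ⟨n, pr⟩ | gr | ⟨gr, xr, yr⟩
      · exact Or.inr (Or.inl (left xl pr.bounded (by norm_num) (by norm_num) (by norm_num)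
          (by norm_num)))
      · exact Or.inr (Or.inl (right hl.bounded gr (by norm_num) (by norm_num) (by norm_num)
          (by norm_num)))
      · exact Or.inr (Or.inr ⟨gl.ser gr,
          left xl hr.bounded (by norm_num) (by norm_num) (by norm_num) (by norm_num),
          right hl.bounded yr (by norm_num) (by norm_num) (by norm_num) (by norm_num)⟩)

open Profiles in
/-- A chain that is parallel to another chain in a minimally tough graph is a path with at least
two edges. -/
theorem IsPearlChain.isPathT_of_parallel (hl : IsPearlChain l) (hr : IsPearlChain r)
    (hT : (SPTree.parallel l r).WF) {O : Profiles} (hO : O.GoodEnv)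
    (ht : Tough ((SPTree.parallel l r).profiles ∅) O) (hr' : ∀ u v, r ≠ .edge u v)
    (hv : ∀ e ∈ l.edges, Violates (l.profiles {e}) (O.par (r.profiles ∅)))
    (hOr : (O.par (r.profiles ∅)).GoodEnv)
    (sep : ∀ p q, O.par (r.profiles ∅) false false false p q → p + 2 ≤ 2 * q) :
    ∃ n, IsPathT l n ∧ 2 ≤ n := by
  have il := l.intact_profiles
  have ir := r.intact_profiles
  have t : Tough (l.profiles ∅) (O.par (r.profiles ∅)) := Tough.par_left ht
  have gain : (l.profiles ∅).HasGain 1 := by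
    rcases hl.eq_edge_or_hasGain with ⟨u, v, rfl⟩ | h
    · have := hv s(u, v) rfl
      rw [SPTree.profiles_edge_singleton] at this
      rw [SPTree.profiles_edge_empty] at t
      exact (not_violates_single hOr t sep this).elim
    · exact h
  have gain' : (r.profiles ∅).HasGain 1 := by
    rcases hr.eq_edge_or_hasGain with ⟨u, v, h⟩ | h
    · exact (hr' u v h).elim
    · exact h
  rcases hl.path_or_bounded hT.1 with ⟨n, hn⟩ | ⟨e, he, h⟩ | ⟨g, ⟨e, he, h⟩, ⟨e', he', h'⟩⟩
  · refine ⟨n, hn, ?_⟩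
    cases hn with
    | edge u v =>
      obtain ⟨f, p, q, hx, e⟩ := gain
      rw [SPTree.profiles_edge_empty] at hx
      obtain ⟨-, rfl, -⟩ := hx
      omega
    | series h₁ h₂ =>
      have := h₁.pos
      have := h₂.pos
      omega
  · exact (not_violates_of_bounded il hOr t gain h sep (hv e he)).elim
  · exact (not_violates_par il ir hO hOr ht g gain' h h' hr.bounded sep (hv e he) (hv e' he')).elim

open Profiles in
/-- A series-parallel piece of a minimally tough graph is a chain of edges and pearls. -/
theorem isPearlChain_of_tough (hT : T.WF) {O : Profiles} (hO : O.GoodEnv)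
    (ht : Tough (T.profiles ∅) O) (hv : ∀ e ∈ T.edges, Violates (T.profiles {e}) O) :
    IsPearlChain T := by
  induction T generalizing O with
  | edge u v => exact .edge u v
  | series l r ihl ihr =>
    have il := l.intact_profiles
    have ir := r.intact_profiles
    have sup : (r.profiles ∅).Superadd ∧ (l.profiles ∅).Superadd := by
      have hs := ht.separates (il.ser ir) hO
      have hd := ht.thrifty (il.ser ir) hO
      exact ⟨SPTree.superadd_profiles
          (fun p q h => hs p q ⟨_, _, _, _, _, _, _, il.none, h, rfl, by simp, by simp⟩)
          (fun p q h => hd p q ⟨_, _, _, _, _, _, _, il.none, h, rfl, by simp, by simp⟩),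
        SPTree.superadd_profiles
          (fun p q h => hs p q ⟨_, _, _, _, _, _, _, h, ir.none, rfl, by simp, by simp⟩)
          (fun p q h => hd p q ⟨_, _, _, _, _, _, _, h, ir.none, rfl, by simp, by simp⟩)⟩
    refine .series (ihl hT.1 (hO.ser_left il ir sup.1 ht) (ht.ser_left il.sound ir.sound hO.sound)
      fun e he => ?_) (ihr hT.2.1 (hO.ser_right il ir sup.2 ht)
        (ht.ser_right il.sound ir.sound hO.sound) fun e he => ?_)
    · have := hv e (Or.inl he)
      rw [hT.profiles_series_left he] at this
      exact this.ser_left (SPTree.sound_profiles _ _) ir.sound hO.sound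
    · have := hv e (Or.inr he)
      rw [hT.profiles_series_right he] at this
      exact this.ser_right il.sound (SPTree.sound_profiles _ _) hO.sound
  | parallel l r ihl ihr =>
    have il := l.intact_profiles
    have ir := r.intact_profiles
    have hd := ht.thrifty (il.par ir) hO
    have supl : (l.profiles ∅).Superadd := by
      refine SPTree.superadd_profiles (fun p q h => ?_)
        (fun p q h => hd p q ⟨_, _, _, _, _, _, h, ir.none, rfl, by simp, by simp⟩)
      rcases hd p q ⟨_, _, _, _, _, _, h, ir.none, rfl, by simp, by simp⟩ with ⟨rfl, rfl⟩ | h'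
      · simpa using (il.idle _ _ h).1
      · exact h'
    have supr : (r.profiles ∅).Superadd := by
      refine SPTree.superadd_profiles (fun p q h => ?_)
        (fun p q h => hd p q ⟨_, _, _, _, _, _, il.none, h, rfl, by simp, by simp⟩)
      rcases hd p q ⟨_, _, _, _, _, _, il.none, h, rfl, by simp, by simp⟩ with ⟨rfl, rfl⟩ | h'
      · simpa using (ir.idle _ _ h).1
      · exact h'
    have hT' : (SPTree.parallel r l).WF := by
      obtain ⟨h₁, h₂, h₃, h₄, h₅, h₆⟩ := hT
      exact ⟨h₂, h₁, h₃.symm, h₄.symm, by rw [Set.inter_comm, h₅, h₃, h₄], h₆.symm⟩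
    have ht' : Tough ((SPTree.parallel r l).profiles ∅) O := by
      rw [SPTree.profiles, par_comm]
      exact ht
    have hOr := hO.par ir supr
    have hOl := hO.par il supl
    have vl : ∀ e ∈ l.edges, Violates (l.profiles {e}) (O.par (r.profiles ∅)) := by
      intro e he
      have := hv e (Or.inl he)
      rw [hT.profiles_parallel_left he] at this
      exact this.par_left
    have vr : ∀ e ∈ r.edges, Violates (r.profiles {e}) (O.par (l.profiles ∅)) := by
      intro e he
      have := hv e (Or.inr he)
      rw [hT.profiles_parallel_right he, par_comm] at this
      exact this.par_left
    have cl := ihl hT.1 hOr (Tough.par_left ht) vl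
    have cr := ihr hT.2.1 hOl (Tough.par_left ht') vr
    have sep : ∀ {X : SPTree V}, IsPearlChain X → ∀ p q,
        O.par (X.profiles ∅) false false false p q → p + 2 ≤ 2 * q := by
      rintro X hX p q ⟨c₁, p₁, q₁, c₂, p₂, q₂, h₁, h₂, hc, rfl, rfl⟩
      obtain ⟨rfl, rfl⟩ : c₁ = false ∧ c₂ = false := by simpa using hc.symm
      have := hX.bounded.disconn _ _ h₂
      have := hO.le (il.par ir) ht h₁
      omega
    have edge_left : ∀ u v, l ≠ .edge u v := by
      rintro u v rfl
      have h₁ := vl s(u, v) rfl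
      have h₂ := Tough.par_left ht
      rw [SPTree.profiles_edge_singleton] at h₁
      rw [SPTree.profiles_edge_empty] at h₂
      exact not_violates_single hOr h₂ (sep cr) h₁
    have edge_right : ∀ u v, r ≠ .edge u v := by
      rintro u v rfl
      have h₁ := vr s(u, v) rfl
      have h₂ := Tough.par_left ht'
      rw [SPTree.profiles_edge_singleton] at h₁
      rw [SPTree.profiles_edge_empty] at h₂
      exact not_violates_single hOl h₂ (sep cl) h₁
    obtain ⟨m, hm, hm'⟩ := cl.isPathT_of_parallel cr hT hO ht edge_right vl hOr (sep cr)
    obtain ⟨n, hn, hn'⟩ := cr.isPathT_of_parallel cl hT' hO ht' edge_left vr hOl (sep cl)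
    exact .pearl ⟨l, r, m, n, rfl, hm, hn, hm', hn'⟩

end Chains

/-! ### Pearl necklaces -/

namespace Profiles

theorem Bounded.tough_isolated {X : Profiles} (h : X.Bounded 2 1 1 (-2)) : Tough X isolated := by
  rintro i j c p q _ _ _ hx ⟨rfl, rfl, rfl⟩ hq
  rcases i with _ | _ <;> rcases j with _ | _
  · rcases c with _ | _
    · have := h.disconn _ _ hx
      simp
      omega
    · have := h.conn _ _ hx
      simp at hq ⊢
      omega
  · have := h.tgt _ _ _ hx
    simp
    omega
  · have := h.src _ _ _ hx
    simp
    omega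
  · have := h.both _ _ _ hx
    simp
    omega

theorem Bounded.not_violates_isolated {X : Profiles} (h : X.Bounded 2 1 1 (-2)) :
    ¬ Violates X isolated := by
  rintro ⟨i, j, c, p, q, _, _, _, hx, ⟨rfl, rfl, rfl⟩, e₁, e₂⟩
  have ht := h.tough_isolated _ _ _ _ _ _ _ _ hx ⟨rfl, rfl, rfl⟩
  have hq : q = 0 ∧ i = false ∧ j = false := by
    rcases i with _ | _ <;> rcases j with _ | _ <;> simp at ht e₁ ⊢ <;> omega
  obtain ⟨rfl, rfl, rfl⟩ := hq
  rcases c with _ | _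
  · have := h.disconn _ _ hx
    omega
  · have := h.conn _ _ hx
    simp at e₂
    omega

/-- Deleting the source (and possibly inner vertices) gains at least `1`. -/
def GainsSrc (X : Profiles) : Prop := ∃ f p q, X true false f p q ∧ 2 * q + 1 ≤ p

/-- Deleting the target (and possibly inner vertices) gains at least `1`. -/
def GainsTgt (X : Profiles) : Prop := ∃ f p q, X false true f p q ∧ 2 * q + 1 ≤ p

/-- The terminals can be separated by few vertices, in terms of the number of components. -/
def Splits (X : Profiles) : Prop := ∃ p q, X false false false p q ∧ 2 * q ≤ p + 1

theorem Splits.violates_isolated {X : Profiles} (h : X.Splits) : Violates X isolated := by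
  obtain ⟨p, q, hx, e⟩ := h
  exact ⟨_, _, _, _, _, _, _, _, hx, ⟨rfl, rfl, rfl⟩, by simp; omega, by simp⟩

theorem Splits.ser_intact {X Y : Profiles} (hX : X.Splits) (hY : Y.Intact) :
    (X.ser Y).Splits := by
  obtain ⟨p, q, hx, e⟩ := hX
  exact ⟨p, q, ⟨_, _, _, _, _, _, _, hx, hY.none, rfl, by simp, by simp⟩, e⟩

theorem Intact.ser_splits {X Y : Profiles} (hX : X.Intact) (hY : Y.Splits) :
    (X.ser Y).Splits := by
  obtain ⟨p, q, hy, e⟩ := hY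
  exact ⟨p, q, ⟨_, _, _, _, _, _, _, hX.none, hy, rfl, by simp, by simp⟩, e⟩

theorem GainsTgt.ser_intact {X Y : Profiles} (hX : X.GainsTgt) (sX : X.Sound) (hY : Y.Intact) :
    (X.ser Y).Splits := by
  obtain ⟨f, p, q, hx, e⟩ := hX
  obtain rfl := sX.tgt_eq hx
  exact ⟨p, q + 1, ⟨_, _, _, _, _, _, _, hx, hY.src, rfl, by simp, by simp⟩, by omega⟩

theorem Intact.ser_gainsSrc {X Y : Profiles} (hX : X.Intact) (hY : Y.GainsSrc) :
    (X.ser Y).Splits := by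
  obtain ⟨f, p, q, hy, e⟩ := hY
  exact ⟨p, q + 1, ⟨_, _, _, _, _, _, _, hX.tgt, hy, rfl, by simp, by simp⟩, by omega⟩

theorem GainsSrc.ser_intact {X Y : Profiles} (hX : X.GainsSrc) (hY : Y.Intact) :
    (X.ser Y).GainsSrc := by
  obtain ⟨f, p, q, hx, e⟩ := hX
  exact ⟨_, p, q, ⟨_, _, _, _, _, _, _, hx, hY.none, rfl, by simp, by simp⟩, e⟩

theorem HasGain.ser_gainsSrc {X Y : Profiles} (hX : X.HasGain 2) (hY : Y.GainsSrc) :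
    (X.ser Y).GainsSrc := by
  obtain ⟨f, p, q, hx, e⟩ := hX
  obtain ⟨f', p', q', hy, e'⟩ := hY
  exact ⟨_, _, _, ⟨_, _, _, _, _, _, _, hx, hy, rfl, rfl, rfl⟩, by simp; omega⟩

theorem GainsSrc.par_intact {X Y : Profiles} (hX : X.GainsSrc) (hY : Y.Intact) :
    (X.par Y).GainsSrc := by
  obtain ⟨f, p, q, hx, e⟩ := hX
  exact ⟨_, p, q, ⟨_, _, _, _, _, _, hx, hY.src, rfl, by simp, by simp⟩, e⟩

theorem GainsTgt.par_intact {X Y : Profiles} (hX : X.GainsTgt) (hY : Y.Intact) :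
    (X.par Y).GainsTgt := by
  obtain ⟨f, p, q, hx, e⟩ := hX
  exact ⟨_, p, q, ⟨_, _, _, _, _, _, hx, hY.tgt, rfl, by simp, by simp⟩, e⟩

end Profiles

/-- A single edge or a pearl. -/
def IsBead {V : Type*} (T : SPTree V) : Prop := (∃ u v, T = .edge u v) ∨ IsPearl T

/-- A series connection of single edges and pearls that is bracketed to the right. -/
inductive IsBeadSeq {V : Type*} : SPTree V → Prop
  | single {b : SPTree V} : IsBead b → IsBeadSeq b
  | cons {b r : SPTree V} : IsBead b → IsBeadSeq r → IsBeadSeq (.series b r)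

section Necklaces

variable {V : Type*} {T l r : SPTree V} {n : ℕ}

theorem IsBeadSeq.append (hl : IsBeadSeq l) (hr : IsBeadSeq r) (h : (SPTree.series l r).WF) :
    ∃ T : SPTree V, IsBeadSeq T ∧ T.WF ∧ T.src = l.src ∧ T.tgt = r.tgt ∧
      T.verts = l.verts ∪ r.verts ∧ T.edges = l.edges ∪ r.edges := by
  induction hl with
  | single hb => exact ⟨_, .cons hb hr, h, rfl, rfl, rfl, rfl⟩
  | @cons b l' hb _ ih =>
    obtain ⟨⟨hb', hl', hbl, hbl'⟩, hr', hlr, hlr'⟩ := h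
    change l'.tgt = r.src at hlr
    change (b.verts ∪ l'.verts) ∩ r.verts = {l'.tgt} at hlr'
    have mem : ∀ x, x ∈ b.verts ∨ x ∈ l'.verts → x ∈ r.verts → x = l'.tgt := by
      intro x hx hx'
      have : x ∈ (b.verts ∪ l'.verts) ∩ r.verts := ⟨hx, hx'⟩
      rwa [hlr'] at this
    obtain ⟨T, h₁, h₂, h₃, h₄, h₅, h₆⟩ := ih ⟨hl', hr', hlr, by
      refine Set.Subset.antisymm (fun x hx => mem x (Or.inr hx.1) hx.2) ?_
      rintro _ rfl
      exact ⟨l'.tgt_mem_verts, hlr ▸ r.src_mem_verts⟩⟩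
    refine ⟨_, .cons hb h₁, ⟨hb', h₂, hbl.trans h₃.symm, ?_⟩, rfl, h₄, ?_, ?_⟩
    · rw [h₅, Set.inter_union_distrib_left, hbl', Set.union_eq_left]
      rintro x ⟨hx, hx'⟩
      rw [← hbl']
      exact ⟨hx, mem x (Or.inl hx) hx' ▸ l'.tgt_mem_verts⟩
    · simp only [SPTree.verts, h₅, Set.union_assoc]
    · simp only [SPTree.edges, h₆, Set.union_assoc]

theorem IsPearlChain.exists_isBeadSeq (h : IsPearlChain T) (hT : T.WF) :
    ∃ T' : SPTree V, IsBeadSeq T' ∧ T'.WF ∧ T'.src = T.src ∧ T'.tgt = T.tgt ∧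
      T'.verts = T.verts ∧ T'.edges = T.edges := by
  induction h with
  | edge u v => exact ⟨_, .single (Or.inl ⟨u, v, rfl⟩), hT, rfl, rfl, rfl, rfl⟩
  | pearl hp => exact ⟨_, .single (Or.inr hp), hT, rfl, rfl, rfl, rfl⟩
  | series _ _ ihl ihr =>
    obtain ⟨l', hl, wl, sl, tl, vl, el⟩ := ihl hT.1
    obtain ⟨r', hr, wr, sr, tr, vr, er⟩ := ihr hT.2.1
    obtain ⟨T', h₁, h₂, h₃, h₄, h₅, h₆⟩ := hl.append hr
      ⟨wl, wr, by rw [tl, sr, hT.2.2.1], by rw [vl, vr, tl, hT.2.2.2]⟩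
    exact ⟨T', h₁, h₂, h₃.trans sl, h₄.trans tr, by rw [h₅, vl, vr]; rfl,
      by rw [h₆, el, er]; rfl⟩

theorem IsBead.isPearlChain (h : IsBead T) : IsPearlChain T := by
  rcases h with ⟨u, v, rfl⟩ | h
  exacts [.edge u v, .pearl h]

theorem IsBeadSeq.isPearlChain (h : IsBeadSeq T) : IsPearlChain T := by
  induction h with
  | single hb => exact hb.isPearlChain
  | cons hb _ ih => exact hb.isPearlChain.series ih

theorem PearlTail.isPearlChain (h : PearlTail T) : IsPearlChain T := by
  induction h with
  | base u v => exact .edge u v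
  | consEdge u v _ ih => exact (IsPearlChain.edge u v).series ih
  | consPearl hp _ ih => exact (IsPearlChain.pearl hp).series ih

/-- A bead sequence ends with an edge unless some edge close to its target is superfluous. -/
theorem IsBeadSeq.pearlTail_or_bounded (h : IsBeadSeq T) (hT : T.WF) :
    PearlTail T ∨ ∃ e ∈ T.edges, (T.profiles {e}).Bounded 2 0 1 (-2) := by
  induction h with
  | single hb =>
    rcases hb with ⟨u, v, rfl⟩ | hp
    · exact Or.inl (.base u v)
    · exact Or.inr (hp.exists_bounded_src hT)
  | cons hb _ ih =>
    rcases ih hT.2.1 with h | ⟨e, he, h⟩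
    · rcases hb with ⟨u, v, rfl⟩ | hp
      · exact Or.inl (.consEdge u v h)
      · exact Or.inl (.consPearl hp h)
    · refine Or.inr ⟨e, Or.inr he, ?_⟩
      rw [hT.profiles_series_right he]
      exact hb.isPearlChain.bounded.ser h (SPTree.sound_profiles _ _) (by norm_num) (by norm_num)
        (by norm_num) (by norm_num)

/-- A bead sequence with no superfluous edge is a pearl necklace. -/
theorem IsBeadSeq.isPearlNecklace (h : IsBeadSeq T) (hT : T.WF) (hne : ∀ u v, T ≠ .edge u v)
    (hv : ∀ e ∈ T.edges, Profiles.Violates (T.profiles {e}) .isolated) : IsPearlNecklace T := by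
  cases h with
  | single hb =>
    rcases hb with ⟨u, v, rfl⟩ | hp
    · exact (hne u v rfl).elim
    · obtain ⟨e, he, h⟩ := hp.exists_bounded_src hT
      exact ((h.mono le_rfl zero_le_one le_rfl le_rfl).not_violates_isolated (hv e he)).elim
  | cons hb hr =>
    rcases hb with ⟨u, v, rfl⟩ | hp
    · refine ⟨u, v, _, rfl, (hr.pearlTail_or_bounded hT.2.1).resolve_right ?_⟩
      rintro ⟨e, he, h⟩
      have h' := (IsPearlChain.edge u v).bounded.ser h (a₀ := 2) (b₀ := 1) (c₀ := 1) (e₀ := -2)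
        (SPTree.sound_profiles _ _) (by norm_num) (by norm_num) (by norm_num) (by norm_num)
      rw [← hT.profiles_series_right he] at h'
      exact h'.not_violates_isolated (hv e (Or.inr he))
    · obtain ⟨e, he, h⟩ := hp.exists_bounded_tgt hT.1
      have h' := h.ser hr.isPearlChain.bounded (a₀ := 2) (b₀ := 1) (c₀ := 1) (e₀ := -2)
        (SPTree.sound_profiles _ _) (by norm_num) (by norm_num) (by norm_num) (by norm_num)
      rw [← hT.profiles_series_left he] at h'
      exact (h'.not_violates_isolated (hv e (Or.inl he))).elim

theorem IsPathT.profiles_singleton (h : IsPathT T n) (hT : T.WF) {e : Sym2 V}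
    (he : e ∈ T.edges) : T.profiles {e} false false false 0 0 := by
  induction h with
  | edge u v =>
    obtain rfl : e = s(u, v) := he
    rw [SPTree.profiles_edge_singleton]
    exact ⟨rfl, rfl, rfl⟩
  | series _ _ ihl ihr =>
    rcases he with he | he
    · rw [hT.profiles_series_left he]
      exact ⟨_, _, _, _, _, _, _, ihl hT.1 he, (SPTree.intact_profiles _).none, rfl, rfl, rfl⟩
    · rw [hT.profiles_series_right he]
      exact ⟨_, _, _, _, _, _, _, (SPTree.intact_profiles _).none, ihr hT.2.1 he, rfl, rfl, rfl⟩

theorem IsPathT.gains (h : IsPathT T n) (hn : 2 ≤ n) (hT : T.WF) {e : Sym2 V}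
    (he : e ∈ T.edges) : (T.profiles {e}).GainsSrc ∨ (T.profiles {e}).GainsTgt := by
  cases h with
  | edge u v => omega
  | series hl hr =>
    rcases he with he | he
    · right
      rw [hT.profiles_series_left he]
      exact ⟨_, _, _, ⟨_, _, _, _, _, _, _, hl.profiles_singleton hT.1 he,
        (SPTree.intact_profiles _).tgt, rfl, rfl, rfl⟩, by simp⟩
    · left
      rw [hT.profiles_series_right he]
      exact ⟨_, _, _, ⟨_, _, _, _, _, _, _, (SPTree.intact_profiles _).src,
        hr.profiles_singleton hT.2.1 he, rfl, rfl, rfl⟩, by simp⟩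

theorem IsPearl.gains (h : IsPearl T) (hT : T.WF) {e : Sym2 V} (he : e ∈ T.edges) :
    (T.profiles {e}).GainsSrc ∨ (T.profiles {e}).GainsTgt := by
  obtain ⟨l, r, m, n, rfl, hl, hr, hm, hn⟩ := h
  rcases he with he | he
  · rw [hT.profiles_parallel_left he]
    exact (hl.gains hm hT.1 he).imp (·.par_intact r.intact_profiles)
      (·.par_intact r.intact_profiles)
  · rw [hT.profiles_parallel_right he, Profiles.par_comm]
    exact (hr.gains hn hT.2.1 he).imp (·.par_intact l.intact_profiles)
      (·.par_intact l.intact_profiles)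

theorem splits_series_edge {u v : V} (hT : (SPTree.series (.edge u v) r).WF)
    (ih : ∀ e ∈ r.edges, (r.profiles {e}).GainsSrc ∨ (r.profiles {e}).Splits) {e : Sym2 V}
    (he : e ∈ (SPTree.series (.edge u v) r).edges) :
    ((SPTree.series (.edge u v) r).profiles {e}).Splits := by
  rcases he with he | he
  · rw [hT.profiles_series_left he]
    refine Profiles.Splits.ser_intact ?_ r.intact_profiles
    exact ⟨0, 0, (IsPathT.edge u v).profiles_singleton hT.1 he, by simp⟩
  · rw [hT.profiles_series_right he]
    exact (ih e he).elim (SPTree.intact_profiles _).ser_gainsSrc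
      (SPTree.intact_profiles _).ser_splits

theorem PearlTail.gainsSrc_or_splits (h : PearlTail T) (hT : T.WF) {e : Sym2 V}
    (he : e ∈ T.edges) : (T.profiles {e}).GainsSrc ∨ (T.profiles {e}).Splits := by
  induction h generalizing e with
  | base u v => exact Or.inr ⟨0, 0, (IsPathT.edge u v).profiles_singleton hT he, by simp⟩
  | consEdge u v _ ih => exact Or.inr (splits_series_edge hT (fun e he => ih hT.2.1 he) he)
  | consPearl hp _ ih =>
    rcases he with he | he
    · rw [hT.profiles_series_left he]
      exact (hp.gains hT.1 he).imp (·.ser_intact (SPTree.intact_profiles _))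
        (·.ser_intact (SPTree.sound_profiles _ _) (SPTree.intact_profiles _))
    · rw [hT.profiles_series_right he]
      exact (ih hT.2.1 he).imp hp.hasGain.ser_gainsSrc (SPTree.intact_profiles _).ser_splits

theorem IsPearlNecklace.violates (h : IsPearlNecklace T) (hT : T.WF) {e : Sym2 V}
    (he : e ∈ T.edges) : Profiles.Violates (T.profiles {e}) .isolated := by
  obtain ⟨u, v, r, rfl, hr⟩ := h
  exact (splits_series_edge hT (fun e he => hr.gainsSrc_or_splits hT.2.1 he) he).violates_isolated

theorem IsPearlNecklace.tough (h : IsPearlNecklace T) :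
    Profiles.Tough (T.profiles ∅) .isolated := by
  obtain ⟨u, v, r, rfl, hr⟩ := h
  exact ((PearlTail.consEdge u v hr).isPearlChain.bounded.mono le_rfl zero_le_one zero_le_one
    le_rfl).tough_isolated

theorem IsPearlNecklace.profiles_one (h : IsPearlNecklace T) :
    T.profiles ∅ false false false 0 1 := by
  obtain ⟨u, v, r, rfl, hr⟩ := h
  exact ⟨_, _, _, _, _, _, _, (SPTree.intact_profiles _).tgt, r.intact_profiles.src, rfl, rfl, rfl⟩

end Necklaces

/-! ### Counting components -/

namespace SimpleGraph

variable {V : Type*} {G : SimpleGraph V} {u v x y : V}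

/-- The graph with the edge between `u` and `v` if `c` holds, and no edge otherwise. -/
def condEdge (c : Bool) (u v : V) : SimpleGraph V := if c then edge u v else ⊥

theorem condEdge_adj {c : Bool} :
    (condEdge c u v).Adj x y ↔ c = true ∧ (x = u ∧ y = v ∨ x = v ∧ y = u) ∧ x ≠ y := by
  cases c
  · simp [condEdge]
  · simp only [condEdge, if_true, edge_adj, true_and]

theorem condEdge_sup_condEdge (c c' : Bool) (u v : V) :
    condEdge c u v ⊔ condEdge c' u v = condEdge (c || c') u v := by
  cases c <;> cases c' <;> simp [condEdge]

theorem reachable_sup_condEdge {c : Bool} : (G ⊔ condEdge c u v).Reachable x y ↔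
    G.Reachable x y ∨ c = true ∧
      (G.Reachable x u ∧ G.Reachable v y ∨ G.Reachable x v ∧ G.Reachable u y) := by
  constructor
  · rw [reachable_iff_reflTransGen]
    intro h
    induction h using Relation.ReflTransGen.head_induction_on with
    | refl => exact Or.inl (Reachable.refl _)
    | head hadj _ ih =>
      rcases hadj with hadj | hadj
      · have := hadj.reachable
        exact ih.imp this.trans (And.imp_right (Or.imp (And.imp_left this.trans)
          (And.imp_left this.trans)))
      · obtain ⟨hc, ⟨rfl, rfl⟩ | ⟨rfl, rfl⟩, -⟩ := condEdge_adj.1 hadj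
        · have := Reachable.refl (G := G)
          tauto
        · have := Reachable.refl (G := G)
          tauto
  · have mono : ∀ {a b}, G.Reachable a b → (G ⊔ condEdge c u v).Reachable a b :=
      fun h => h.mono le_sup_left
    rintro (h | ⟨rfl, h⟩)
    · exact mono h
    · have huv : (G ⊔ condEdge true u v).Reachable u v := by
        by_cases huv : u = v
        · exact huv ▸ Reachable.refl _
        · exact Adj.reachable (Or.inr (condEdge_adj.2 ⟨rfl, Or.inl ⟨rfl, rfl⟩, huv⟩))
      rcases h with ⟨h, h'⟩ | ⟨h, h'⟩
      · exact (mono h).trans (huv.trans (mono h'))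
      · exact (mono h).trans (huv.symm.trans (mono h'))

theorem reachable_eq_of_isolated (hx : ∀ y, ¬ G.Adj x y) : G.Reachable x y ↔ x = y := by
  refine ⟨fun h => ?_, fun h => h ▸ Reachable.refl _⟩
  rw [reachable_iff_reflTransGen] at h
  rcases h.cases_head with h | ⟨z, hz, -⟩
  exacts [h, (hx z hz).elim]

open Classical in
/-- Whether there is a walk from `u` to `v`, as a Boolean. -/
noncomputable def reach (G : SimpleGraph V) (u v : V) : Bool := decide (G.Reachable u v)

theorem reach_eq_true_iff : G.reach u v = true ↔ G.Reachable u v := by simp [reach]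

theorem reach_eq_false_iff : G.reach u v = false ↔ ¬ G.Reachable u v := by simp [reach]

theorem card_connectedComponent_sup_condEdge [Finite V] (c : Bool) :
    Nat.card G.ConnectedComponent = Nat.card (G ⊔ condEdge c u v).ConnectedComponent +
      (c && !G.reach u v).toNat := by
  by_cases h : c = true ∧ ¬ G.Reachable u v
  · obtain ⟨rfl, h⟩ := h
    let φ : {C : G.ConnectedComponent // C ≠ G.connectedComponentMk v} →
        (G ⊔ condEdge true u v).ConnectedComponent :=
      fun C => C.1.map (Hom.ofLE le_sup_left)
    have hφ : Function.Bijective φ := by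
      constructor
      · rintro ⟨C, hC⟩ ⟨D, hD⟩ hCD
        induction C using ConnectedComponent.ind with | h x => ?_
        induction D using ConnectedComponent.ind with | h y => ?_
        have hxy := reachable_sup_condEdge.1 (ConnectedComponent.exact hCD)
        rw [Ne, ConnectedComponent.eq] at hC hD
        refine Subtype.ext (ConnectedComponent.sound ?_)
        rcases hxy with hxy | ⟨-, ⟨-, hxy⟩ | ⟨hxy, -⟩⟩
        exacts [hxy, (hD hxy.symm).elim, (hC hxy).elim]
      · intro C
        induction C using ConnectedComponent.ind with | h x => ?_
        by_cases hx : G.Reachable x v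
        · refine ⟨⟨G.connectedComponentMk u, fun h' => h (ConnectedComponent.exact h')⟩, ?_⟩
          exact ConnectedComponent.sound (reachable_sup_condEdge.2 (Or.inr
            ⟨rfl, Or.inl ⟨Reachable.refl _, hx.symm⟩⟩))
        · exact ⟨⟨G.connectedComponentMk x, fun h' => hx (ConnectedComponent.exact h')⟩, rfl⟩
    rw [← Nat.card_congr (Equiv.ofBijective φ hφ)]
    have := Set.ncard_add_ncard_compl {G.connectedComponentMk v}
    rw [Set.ncard_singleton] at this
    rw [← this, add_comm, reach_eq_false_iff.2 h]
    rfl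
  · have : ∀ x y, G.Reachable x y ↔ (G ⊔ condEdge c u v).Reachable x y := by
      intro x y
      rw [reachable_sup_condEdge, iff_self_or]
      rintro ⟨rfl, hxy⟩
      have huv : G.Reachable u v := by simpa using h
      rcases hxy with ⟨h₁, h₂⟩ | ⟨h₁, h₂⟩
      exacts [h₁.trans (huv.trans h₂), h₁.trans (huv.symm.trans h₂)]
    have hc : (c && !G.reach u v) = false := by
      simpa [reach_eq_true_iff] using h
    rw [hc, Bool.toNat_false, add_zero]
    exact Nat.card_congr (Quot.congrRight this)

end SimpleGraph

theorem numComp_add_ncard {V : Type*} [Finite V] {G H : SimpleGraph V} {S : Set V}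
    (h : ∀ x y, H.Adj x y ↔ G.Adj x y ∧ x ∉ S ∧ y ∉ S) :
    numComp G S + S.ncard = Nat.card H.ConnectedComponent := by
  have isolated : ∀ x ∈ S, ∀ y, H.Reachable x y ↔ x = y := fun x hx y =>
    reachable_eq_of_isolated fun z hz => ((h x z).1 hz).2.1 hx
  have lift : ∀ x y, H.Reachable x y → ∀ (hx : x ∉ S) (hy : y ∉ S),
      (induce Sᶜ G).Reachable ⟨x, hx⟩ ⟨y, hy⟩ := by
    intro x y hxy hx hy
    rw [reachable_iff_reflTransGen] at hxy
    induction hxy using Relation.ReflTransGen.head_induction_on with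
    | refl => exact Reachable.refl _
    | @head a b hab _ ih =>
      obtain ⟨h₁, h₂, h₃⟩ := (h a b).1 hab
      refine Reachable.trans (v := ⟨b, h₃⟩) (Adj.reachable ?_) (ih h₃)
      exact h₁
  let ι : induce Sᶜ G →g H := ⟨Subtype.val, fun {a b} hab => (h a b).2 ⟨hab, a.2, b.2⟩⟩
  let φ : (induce Sᶜ G).ConnectedComponent ⊕ S → H.ConnectedComponent :=
    Sum.elim (fun C => C.map ι) fun x => H.connectedComponentMk x
  have hφ : Function.Bijective φ := by
    constructor
    · rintro (C | x) (D | y) hCD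
      · induction C using ConnectedComponent.ind with | h x => ?_
        induction D using ConnectedComponent.ind with | h y => ?_
        exact congrArg _ (ConnectedComponent.sound
          (lift _ _ (ConnectedComponent.exact hCD) x.2 y.2))
      · induction C using ConnectedComponent.ind with | h x => ?_
        have : (y : V) = x := (isolated _ y.2 _).1 (ConnectedComponent.exact hCD).symm
        exact (x.2 (this ▸ y.2)).elim
      · induction D using ConnectedComponent.ind with | h y => ?_
        have : (x : V) = y := (isolated _ x.2 _).1 (ConnectedComponent.exact hCD)
        exact (y.2 (this ▸ x.2)).elim
      · exact congrArg _ (Subtype.ext ((isolated _ x.2 _).1 (ConnectedComponent.exact hCD)))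
    · intro C
      induction C using ConnectedComponent.ind with | h x => ?_
      by_cases hx : x ∈ S
      · exact ⟨Sum.inr ⟨x, hx⟩, rfl⟩
      · exact ⟨Sum.inl (connectedComponentMk _ ⟨x, hx⟩), rfl⟩
  rw [← Nat.card_congr (Equiv.ofBijective φ hφ), Nat.card_sum]
  rfl

/-! ### The profile of a set of deleted vertices -/

namespace SPTree

variable {V : Type*} {F : Set (Sym2 V)} {S : Set V} {T : SPTree V}

open Classical in
/-- Membership in `S` as a Boolean. -/
noncomputable def mem (S : Set V) (x : V) : Bool := decide (x ∈ S)

theorem mem_eq_of_iff {x : V} {k : Bool} (h : x ∈ S ↔ k = true) : mem S x = k := by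
  cases k <;> simp_all [mem]

theorem mem_congr {S S' : Set V} {x : V} (h : x ∈ S ↔ x ∈ S') : mem S x = mem S' x :=
  decide_eq_decide.2 h

open Classical in
/-- Whether the terminals are connected after deleting the edges in `F` and the vertices in `S`. -/
noncomputable def conn (F : Set (Sym2 V)) (S : Set V) : SPTree V → Bool
  | edge u v => decide (s(u, v) ∉ F) && !mem S u && !mem S v
  | series l r => l.conn F S && r.conn F S
  | parallel l r => l.conn F S || r.conn F S

/-- The number of components that contain no terminal after deleting the edges in `F` and the
vertices in `S`. -/
noncomputable def pieces (F : Set (Sym2 V)) (S : Set V) : SPTree V → ℕ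
  | edge _ _ => 0
  | series l r => l.pieces F S + r.pieces F S +
      (!(mem S l.tgt || l.conn F S || r.conn F S)).toNat
  | parallel l r => l.pieces F S + r.pieces F S

/-- The number of inner vertices in `S`. -/
noncomputable def cuts (S : Set V) : SPTree V → ℕ
  | edge _ _ => 0
  | series l r => l.cuts S + r.cuts S + (mem S l.tgt).toNat
  | parallel l r => l.cuts S + r.cuts S

/-- The graph of `T` without the edges in `F` and the edges that meet `S`. -/
noncomputable def alive (F : Set (Sym2 V)) (S : Set V) : SPTree V → SimpleGraph V
  | edge u v => condEdge ((edge u v).conn F S) u v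
  | series l r => l.alive F S ⊔ r.alive F S
  | parallel l r => l.alive F S ⊔ r.alive F S

theorem WF.profiles_conn (hT : T.WF) : T.profiles F (mem S T.src) (mem S T.tgt)
    (T.conn F S) (T.pieces F S) (T.cuts S) := by
  induction T with
  | edge u v => exact ⟨rfl, rfl, rfl⟩
  | series l r hl hr =>
    refine ⟨mem S l.tgt, _, _, _, _, _, _, hl hT.1, ?_, rfl, rfl, rfl⟩
    rw [hT.2.2.1]
    exact hr hT.2.1
  | parallel l r hl hr =>
    refine ⟨_, _, _, _, _, _, hl hT.1, ?_, rfl, rfl, rfl⟩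
    change r.profiles F (mem S l.src) (mem S l.tgt) _ _ _
    rw [hT.2.2.1, hT.2.2.2.1]
    exact hr hT.2.1

theorem conn_congr {S S' : Set V} (h : ∀ x ∈ T.verts, x ∈ S ↔ x ∈ S') :
    T.conn F S = T.conn F S' := by
  induction T with
  | edge u v => rw [conn, conn, mem_congr (h u (Or.inl rfl)), mem_congr (h v (Or.inr rfl))]
  | series l r hl hr | parallel l r hl hr =>
    rw [conn, conn, hl fun x hx => h x (Or.inl hx), hr fun x hx => h x (Or.inr hx)]

theorem pieces_congr {S S' : Set V} (h : ∀ x ∈ T.verts, x ∈ S ↔ x ∈ S') :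
    T.pieces F S = T.pieces F S' := by
  induction T with
  | edge u v => rfl
  | series l r hl hr =>
    have h₁ : ∀ x ∈ l.verts, x ∈ S ↔ x ∈ S' := fun x hx => h x (Or.inl hx)
    have h₂ : ∀ x ∈ r.verts, x ∈ S ↔ x ∈ S' := fun x hx => h x (Or.inr hx)
    simp only [pieces, hl h₁, hr h₂, conn_congr h₁, conn_congr h₂,
      mem_congr (h₁ _ l.tgt_mem_verts)]
  | parallel l r hl hr =>
    rw [pieces, pieces, hl fun x hx => h x (Or.inl hx), hr fun x hx => h x (Or.inr hx)]

theorem cuts_congr {S S' : Set V} (h : ∀ x ∈ T.verts, x ∈ S ↔ x ∈ S') :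
    T.cuts S = T.cuts S' := by
  induction T with
  | edge u v => rfl
  | series l r hl hr =>
    have h₁ : ∀ x ∈ l.verts, x ∈ S ↔ x ∈ S' := fun x hx => h x (Or.inl hx)
    have h₂ : ∀ x ∈ r.verts, x ∈ S ↔ x ∈ S' := fun x hx => h x (Or.inr hx)
    simp only [cuts, hl h₁, hr h₂, mem_congr (h₁ _ l.tgt_mem_verts)]
  | parallel l r hl hr =>
    rw [cuts, cuts, hl fun x hx => h x (Or.inl hx), hr fun x hx => h x (Or.inr hx)]

theorem WF.eq_of_mem {l r : SPTree V} (h : (series l r).WF) {x : V} (hl : x ∈ l.verts)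
    (hr : x ∈ r.verts) : x = l.tgt := by
  have : x ∈ l.verts ∩ r.verts := ⟨hl, hr⟩
  rwa [h.2.2.2] at this

theorem WF.eq_or_eq_of_mem {l r : SPTree V} (h : (parallel l r).WF) {x : V} (hl : x ∈ l.verts)
    (hr : x ∈ r.verts) : x = l.src ∨ x = l.tgt := by
  have : x ∈ l.verts ∩ r.verts := ⟨hl, hr⟩
  rwa [h.2.2.2.2.1] at this

/-- Every profile is the profile of a set of deleted vertices. -/
theorem WF.exists_of_profiles (hT : T.WF) {i j c : Bool} {p q : ℕ}
    (h : T.profiles F i j c p q) : ∃ S ⊆ T.verts, (T.src ∈ S ↔ i = true) ∧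
      (T.tgt ∈ S ↔ j = true) ∧ T.conn F S = c ∧ T.pieces F S = p ∧ T.cuts S = q := by
  induction T generalizing i j c p q with
  | edge u v =>
    obtain ⟨rfl, rfl, rfl⟩ := h
    have huv : u ≠ v := hT
    have hu : u ∈ {x | x = u ∧ i = true ∨ x = v ∧ j = true} ↔ i = true := by simp [huv]
    have hv : v ∈ {x | x = u ∧ i = true ∨ x = v ∧ j = true} ↔ j = true := by simp [huv.symm]
    refine ⟨{x | x = u ∧ i = true ∨ x = v ∧ j = true}, ?_, hu, hv, ?_, rfl, rfl⟩
    · rintro x (⟨rfl, -⟩ | ⟨rfl, -⟩)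
      exacts [Or.inl rfl, Or.inr rfl]
    · simp only [conn, mem, hu, hv]
      simp
  | series l r ihl ihr =>
    obtain ⟨k, c₁, p₁, q₁, c₂, p₂, q₂, h₁, h₂, rfl, rfl, rfl⟩ := h
    obtain ⟨S₁, v₁, s₁, t₁, rfl, rfl, rfl⟩ := ihl hT.1 h₁
    obtain ⟨S₂, v₂, s₂, t₂, rfl, rfl, rfl⟩ := ihr hT.2.1 h₂
    have hS₁ : ∀ x ∈ l.verts, x ∈ S₁ ∪ S₂ ↔ x ∈ S₁ := by
      refine fun x hx => or_iff_left_of_imp fun hx' => ?_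
      obtain rfl := hT.eq_of_mem hx (v₂ hx')
      rw [hT.2.2.1] at hx'
      exact t₁.2 (s₂.1 hx')
    have hS₂ : ∀ x ∈ r.verts, x ∈ S₁ ∪ S₂ ↔ x ∈ S₂ := by
      refine fun x hx => or_iff_right_of_imp fun hx' => ?_
      obtain rfl := hT.eq_of_mem (v₁ hx') hx
      rw [hT.2.2.1]
      exact s₂.2 (t₁.1 hx')
    have hk : mem (S₁ ∪ S₂) l.tgt = k := mem_eq_of_iff ((hS₁ _ l.tgt_mem_verts).trans t₁)
    refine ⟨S₁ ∪ S₂, Set.union_subset_union v₁ v₂, (hS₁ _ l.src_mem_verts).trans s₁,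
      (hS₂ _ r.tgt_mem_verts).trans t₂, ?_, ?_, ?_⟩
    · rw [conn, conn_congr hS₁, conn_congr hS₂]
    · simp only [pieces, conn_congr hS₁, conn_congr hS₂, pieces_congr hS₁, pieces_congr hS₂,
        hk]
    · simp only [cuts, cuts_congr hS₁, cuts_congr hS₂, hk]
  | parallel l r ihl ihr =>
    obtain ⟨c₁, p₁, q₁, c₂, p₂, q₂, h₁, h₂, rfl, rfl, rfl⟩ := h
    obtain ⟨S₁, v₁, s₁, t₁, rfl, rfl, rfl⟩ := ihl hT.1 h₁
    obtain ⟨S₂, v₂, s₂, t₂, rfl, rfl, rfl⟩ := ihr hT.2.1 h₂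
    have hs : l.src ∈ S₁ ↔ l.src ∈ S₂ := s₁.trans (hT.2.2.1 ▸ s₂.symm)
    have ht : l.tgt ∈ S₁ ↔ l.tgt ∈ S₂ := t₁.trans (hT.2.2.2.1 ▸ t₂.symm)
    have hS₁ : ∀ x ∈ l.verts, x ∈ S₁ ∪ S₂ ↔ x ∈ S₁ := by
      refine fun x hx => or_iff_left_of_imp fun hx' => ?_
      rcases hT.eq_or_eq_of_mem hx (v₂ hx') with rfl | rfl
      exacts [hs.2 hx', ht.2 hx']
    have hS₂ : ∀ x ∈ r.verts, x ∈ S₁ ∪ S₂ ↔ x ∈ S₂ := by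
      refine fun x hx => or_iff_right_of_imp fun hx' => ?_
      rcases hT.eq_or_eq_of_mem (v₁ hx') hx with rfl | rfl
      exacts [hs.1 hx', ht.1 hx']
    refine ⟨S₁ ∪ S₂, Set.union_subset_union v₁ v₂, (hS₁ _ l.src_mem_verts).trans s₁,
      (hS₁ _ l.tgt_mem_verts).trans t₁, ?_, ?_, ?_⟩
    · rw [conn, conn_congr hS₁, conn_congr hS₂]
    · rw [pieces, pieces_congr hS₁, pieces_congr hS₂]
    · rw [cuts, cuts_congr hS₁, cuts_congr hS₂]

theorem WF.ncard_inter_series [Finite V] {l r : SPTree V} (hT : (series l r).WF) (S : Set V) :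
    ((series l r).verts ∩ S).ncard + (mem S l.tgt).toNat =
      (l.verts ∩ S).ncard + (r.verts ∩ S).ncard := by
  rw [← Set.ncard_union_add_ncard_inter, ← Set.union_inter_distrib_right,
    ← Set.inter_inter_distrib_right, hT.2.2.2]
  by_cases h : l.tgt ∈ S <;> simp [h, mem, verts]

theorem WF.ncard_inter_parallel [Finite V] {l r : SPTree V} (hT : (parallel l r).WF)
    (S : Set V) : ((parallel l r).verts ∩ S).ncard + (mem S l.src).toNat +
      (mem S l.tgt).toNat = (l.verts ∩ S).ncard + (r.verts ∩ S).ncard := by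
  rw [← Set.ncard_union_add_ncard_inter, ← Set.union_inter_distrib_right,
    ← Set.inter_inter_distrib_right, hT.2.2.2.2.1]
  have := hT.1.src_ne_tgt
  by_cases h : l.src ∈ S <;> by_cases h' : l.tgt ∈ S <;>
    simp [h, h', mem, verts, Set.insert_inter_of_mem, Set.insert_inter_of_notMem,
      Set.ncard_pair this]

theorem WF.ncard_inter_edge {u v : V} (hT : (edge u v).WF) (S : Set V) :
    ((edge u v).verts ∩ S).ncard = (mem S u).toNat + (mem S v).toNat := by
  have : u ≠ v := hT
  by_cases h : u ∈ S <;> by_cases h' : v ∈ S <;>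
    simp [h, h', mem, verts, Set.insert_inter_of_mem, Set.insert_inter_of_notMem,
      Set.ncard_pair this]

theorem WF.ncard_inter [Finite V] (hT : T.WF) : (T.verts ∩ S).ncard =
    T.cuts S + (mem S T.src).toNat + (mem S T.tgt).toNat := by
  induction T with
  | edge u v => simp [hT.ncard_inter_edge S, cuts, src, tgt]
  | series l r hl hr =>
    have := hT.ncard_inter_series S
    have hl := hl hT.1
    have hr := hr hT.2.1
    simp only [cuts, src, tgt, hT.2.2.1] at *
    omega
  | parallel l r hl hr =>
    have := hT.ncard_inter_parallel S
    have hl := hl hT.1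
    have hr := hr hT.2.1
    simp only [cuts, src, tgt, hT.2.2.1, hT.2.2.2.1] at *
    omega

theorem alive_adj {x y : V} : (T.alive F S).Adj x y ↔
    x ≠ y ∧ s(x, y) ∈ T.edges ∧ s(x, y) ∉ F ∧ x ∉ S ∧ y ∉ S := by
  induction T with
  | edge u v =>
    simp only [alive, condEdge_adj, conn, edges, Set.mem_singleton_iff]
    constructor
    · rintro ⟨h, ⟨rfl, rfl⟩ | ⟨rfl, rfl⟩, hne⟩
      · simp_all [mem]
      · rw [Sym2.eq_swap]
        simp_all [mem]
    · rintro ⟨hne, h, h'⟩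
      rcases Sym2.eq_iff.1 h with ⟨rfl, rfl⟩ | ⟨rfl, rfl⟩
      · simp_all [mem]
      · rw [Sym2.eq_swap] at h'
        simp_all [mem]
  | series l r hl hr | parallel l r hl hr =>
    simp only [alive, sup_adj, hl, hr, edges, Set.mem_union]
    tauto

/-- No inner vertex of `T` has a neighbor in `G`. -/
def Avoids (T : SPTree V) (G : SimpleGraph V) : Prop :=
  ∀ x ∈ T.verts, x ≠ T.src → x ≠ T.tgt → ∀ y, ¬ G.Adj x y

theorem sound_conn (hT : T.WF) (h : T.conn F S = true) : T.src ∉ S ∧ T.tgt ∉ S := by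
  classical
  have := hT.profiles_conn (F := F) (S := S)
  rw [h] at this
  simpa [mem] using T.sound_profiles F _ _ _ _ this

theorem Avoids.sup {G H : SimpleGraph V} (hG : T.Avoids G) (hH : T.Avoids H) :
    T.Avoids (G ⊔ H) :=
  fun x hx hs ht y hxy => hxy.elim (hG x hx hs ht y) (hH x hx hs ht y)

theorem mem_verts_of_alive_adj {x y : V} (h : (T.alive F S).Adj x y) : x ∈ T.verts :=
  mem_verts_of_mem_edges (alive_adj.1 h).2.1 (Sym2.mem_mk_left x y)

theorem avoids_condEdge {c : Bool} {u v : V} (hu : u ∈ T.verts → u = T.src ∨ u = T.tgt)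
    (hv : v ∈ T.verts → v = T.src ∨ v = T.tgt) : T.Avoids (condEdge c u v) := by
  intro x hx hs ht y hxy
  obtain ⟨-, ⟨rfl, -⟩ | ⟨rfl, -⟩, -⟩ := condEdge_adj.1 hxy
  exacts [(hu hx).elim hs ht, (hv hx).elim hs ht]

section Series

variable {l r : SPTree V} {G : SimpleGraph V} {x : V}

theorem WF.left_of_mem_series (hT : (series l r).WF)
    (hx : x ∈ (series l r).verts → x = l.src ∨ x = r.tgt)
    (hl : x ∈ l.verts) : x = l.src ∨ x = l.tgt :=
  (hx (Or.inl hl)).imp_right fun h => hT.eq_of_mem hl (by rw [h]; exact r.tgt_mem_verts)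

theorem WF.right_of_mem_series (hT : (series l r).WF)
    (hx : x ∈ (series l r).verts → x = l.src ∨ x = r.tgt)
    (hr : x ∈ r.verts) : x = r.src ∨ x = r.tgt :=
  (hx (Or.inr hr)).imp_left fun h =>
    (hT.eq_of_mem (by rw [h]; exact l.src_mem_verts) hr).trans hT.2.2.1

theorem WF.avoids_series_left (hT : (series l r).WF) (hG : (series l r).Avoids G) : l.Avoids G :=
  fun x hx hs ht => hG x (Or.inl hx) hs fun h => ht (hT.eq_of_mem hx (h ▸ r.tgt_mem_verts))

theorem WF.avoids_series_right (hT : (series l r).WF) (hG : (series l r).Avoids G) : r.Avoids G :=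
  fun x hx hs ht => hG x (Or.inr hx)
    (fun h => hs ((hT.eq_of_mem (h ▸ l.src_mem_verts) hx).trans hT.2.2.1)) ht

theorem WF.avoids_alive_series (hT : (series l r).WF) : r.Avoids (l.alive F S) :=
  fun _ hx hs _ _ hxy => hs ((hT.eq_of_mem (mem_verts_of_alive_adj hxy) hx).trans hT.2.2.1)

theorem WF.tgt_ne_src (hT : (series l r).WF) : l.tgt ≠ l.src := hT.1.src_ne_tgt.symm

theorem WF.tgt_ne_tgt (hT : (series l r).WF) : l.tgt ≠ r.tgt :=
  fun h => hT.2.1.src_ne_tgt (hT.2.2.1.symm.trans h)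

theorem WF.not_adj_tgt (hT : (series l r).WF) (hG : (series l r).Avoids G) (y : V) :
    ¬ G.Adj l.tgt y :=
  hG _ (Or.inl l.tgt_mem_verts) hT.tgt_ne_src hT.tgt_ne_tgt y

end Series

section Parallel

variable {l r : SPTree V} {G : SimpleGraph V}

theorem avoids_parallel_left (hG : (parallel l r).Avoids G) : l.Avoids G :=
  fun x hx => hG x (Or.inl hx)

theorem WF.avoids_parallel_right (hT : (parallel l r).WF) (hG : (parallel l r).Avoids G) :
    r.Avoids G :=
  fun x hx hs ht => hG x (Or.inr hx) (hT.2.2.1 ▸ hs) (hT.2.2.2.1 ▸ ht)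

theorem WF.avoids_alive_parallel (hT : (parallel l r).WF) : r.Avoids (l.alive F S) :=
  fun _ hx hs ht _ hxy => (hT.eq_or_eq_of_mem (mem_verts_of_alive_adj hxy) hx).elim
    (fun h => hs (h.trans hT.2.2.1)) (fun h => ht (h.trans hT.2.2.2.1))

end Parallel

/-- Outside its inner vertices, a series-parallel graph is as good as an edge between its
terminals or no edge at all. -/
theorem WF.reachable_sup_alive (hT : T.WF) {G : SimpleGraph V} (hG : T.Avoids G) {x y : V}
    (hx : x ∈ T.verts → x = T.src ∨ x = T.tgt) (hy : y ∈ T.verts → y = T.src ∨ y = T.tgt) :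
    (G ⊔ T.alive F S).Reachable x y ↔
      (G ⊔ condEdge (T.conn F S) T.src T.tgt).Reachable x y := by
  induction T generalizing G x y with
  | edge u v => rfl
  | series l r hl hr =>
    have hG' : r.Avoids (G ⊔ l.alive F S) :=
      (hT.avoids_series_right hG).sup hT.avoids_alive_series
    have hG'' : l.Avoids (G ⊔ condEdge (r.conn F S) r.src r.tgt) :=
      (hT.avoids_series_left hG).sup (avoids_condEdge (fun _ => Or.inr hT.2.2.1.symm)
        fun h => Or.inr (hT.eq_of_mem h r.tgt_mem_verts))
    rw [alive, ← sup_assoc, hr hT.2.1 hG' (hT.right_of_mem_series hx)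
      (hT.right_of_mem_series hy), sup_right_comm,
      hl hT.1 hG'' (hT.left_of_mem_series hx) (hT.left_of_mem_series hy)]
    have hm : ∀ z, z ≠ l.tgt → ¬ G.Reachable l.tgt z := fun z hz h =>
      hz ((reachable_eq_of_isolated (hT.not_adj_tgt hG)).1 h).symm
    have hm' : ∀ z, z ≠ l.tgt → ¬ G.Reachable z l.tgt := fun z hz h => hm z hz h.symm
    have inner : ∀ {z}, (z ∈ (series l r).verts → z = l.src ∨ z = r.tgt) → z ≠ l.tgt := by
      rintro z hz rfl
      exact (hz (Or.inl l.tgt_mem_verts)).elim hT.tgt_ne_src hT.tgt_ne_tgt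
    have hxm := inner hx
    have hym := inner hy
    simp only [reachable_sup_condEdge, ← hT.2.2.1, hm _ hym, hm' _ hxm,
      hm _ hT.tgt_ne_src.symm, hm' _ hT.tgt_ne_src.symm, conn, src, tgt, Bool.and_eq_true,
      Reachable.refl]
    cases l.conn F S <;> cases r.conn F S <;> simp
  | parallel l r hl hr =>
    have hG' : r.Avoids (G ⊔ l.alive F S) :=
      (hT.avoids_parallel_right hG).sup hT.avoids_alive_parallel
    have hG'' : l.Avoids (G ⊔ condEdge (r.conn F S) r.src r.tgt) :=
      (avoids_parallel_left hG).sup (avoids_condEdge (fun _ => Or.inl hT.2.2.1.symm)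
        fun _ => Or.inr hT.2.2.2.1.symm)
    rw [alive, ← sup_assoc, hr hT.2.1 hG' (fun h => hT.2.2.1 ▸ hT.2.2.2.1 ▸ hx (Or.inr h))
      (fun h => hT.2.2.1 ▸ hT.2.2.2.1 ▸ hy (Or.inr h)), sup_right_comm,
      hl hT.1 hG'' (fun h => hx (Or.inl h)) (fun h => hy (Or.inl h)), ← hT.2.2.1,
      ← hT.2.2.2.1, sup_assoc, sup_comm (condEdge _ _ _), condEdge_sup_condEdge]
    rfl

theorem toNat_mem_add_toNat_mem_compl (S : Set V) (x : V) :
    (mem S x).toNat + (mem Sᶜ x).toNat = 1 := by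
  by_cases h : x ∈ S <;> simp [mem, h]

theorem WF.card_connectedComponent [Finite V] (hT : T.WF) {G : SimpleGraph V}
    (hG : T.Avoids G) :
    Nat.card G.ConnectedComponent + T.pieces F S + (mem Sᶜ T.src).toNat +
        (mem Sᶜ T.tgt).toNat =
      Nat.card (G ⊔ T.alive F S).ConnectedComponent + (T.verts ∩ Sᶜ).ncard +
        (T.conn F S && !G.reach T.src T.tgt).toNat := by
  induction T generalizing G with
  | edge u v =>
    rw [hT.ncard_inter_edge, card_connectedComponent_sup_condEdge (G := G) (u := u) (v := v)
      ((edge u v).conn F S)]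
    change _ + 0 + (mem Sᶜ u).toNat + (mem Sᶜ v).toNat =
      Nat.card (G ⊔ condEdge ((edge u v).conn F S) u v).ConnectedComponent + _ +
        (_ && !G.reach u v).toNat
    omega
  | series l r hl hr =>
    have hl := hl hT.1 (hT.avoids_series_left hG)
    have hr := hr hT.2.1
      ((hT.avoids_series_right hG).sup (hT.avoids_alive_series (F := F) (S := S)))
    have hn := hT.ncard_inter_series Sᶜ
    have hk := toNat_mem_add_toNat_mem_compl S l.tgt
    have hsm : G.reach l.src l.tgt = false := reach_eq_false_iff.2 fun h =>
      hT.tgt_ne_src ((reachable_eq_of_isolated (hT.not_adj_tgt hG)).1 h.symm)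
    have hmt : ¬ G.Reachable l.tgt r.tgt := fun h =>
      hT.tgt_ne_tgt ((reachable_eq_of_isolated (hT.not_adj_tgt hG)).1 h)
    have hst : (G ⊔ l.alive F S).reach l.tgt r.tgt = (l.conn F S && G.reach l.src r.tgt) := by
      rw [Bool.eq_iff_iff, Bool.and_eq_true, reach_eq_true_iff, reach_eq_true_iff,
        hT.1.reachable_sup_alive (hT.avoids_series_left hG) (fun _ => Or.inr rfl)
        fun h => Or.inr (hT.eq_of_mem h r.tgt_mem_verts), reachable_sup_condEdge]
      have := Reachable.refl (G := G) l.tgt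
      tauto
    have cl := sound_conn (F := F) (S := S) hT.1
    have cr := sound_conn (F := F) (S := S) hT.2.1
    rw [← hT.2.2.1] at hr cr
    rw [hst] at hr
    rw [hsm] at hl
    simp only [alive, ← sup_assoc, pieces, src, tgt, conn]
    replace cl : l.conn F S = true → mem S l.tgt = false := fun h => by simpa [mem] using (cl h).2
    replace cr : r.conn F S = true → mem S l.tgt = false := fun h => by simpa [mem] using (cr h).1
    revert hl hr cl cr hk hn
    generalize l.conn F S = c₁, r.conn F S = c₂, G.reach l.src r.tgt = b, mem S l.tgt = k,
      mem Sᶜ l.tgt = k'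
    cases c₁ <;> cases c₂ <;> cases b <;> cases k <;> cases k' <;> simp <;> omega
  | parallel l r hl hr =>
    have hl := hl hT.1 (avoids_parallel_left hG)
    have hr := hr hT.2.1
      ((hT.avoids_parallel_right hG).sup (hT.avoids_alive_parallel (F := F) (S := S)))
    have hn := hT.ncard_inter_parallel Sᶜ
    have hst : (G ⊔ l.alive F S).reach l.src l.tgt = (l.conn F S || G.reach l.src l.tgt) := by
      rw [Bool.eq_iff_iff, Bool.or_eq_true, reach_eq_true_iff, reach_eq_true_iff,
        hT.1.reachable_sup_alive (avoids_parallel_left hG) (fun _ => Or.inl rfl)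
        fun h => Or.inr rfl, reachable_sup_condEdge]
      have := Reachable.refl (G := G)
      tauto
    rw [← hT.2.2.1, ← hT.2.2.2.1, hst] at hr
    simp only [alive, ← sup_assoc, pieces, src, tgt, conn]
    revert hl hr
    generalize l.conn F S = c₁, r.conn F S = c₂, G.reach l.src l.tgt = b
    cases c₁ <;> cases c₂ <;> cases b <;> simp <;> omega

end SPTree

/-! ### Toughness one half -/

theorem bddBelow_cutset_ratios {V : Type*} (G : SimpleGraph V) :
    BddBelow {r : ℝ | ∃ S : Set V, IsCutset G S ∧ r = (S.ncard : ℝ) / (numComp G S : ℝ)} :=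
  ⟨0, by rintro _ ⟨S, -, rfl⟩; positivity⟩

theorem IsCutset.half_le_iff {V : Type*} {G : SimpleGraph V} {S : Set V} (h : IsCutset G S) :
    (1 / 2 : ℝ) ≤ (S.ncard : ℝ) / (numComp G S : ℝ) ↔ numComp G S ≤ 2 * S.ncard := by
  have : (0 : ℝ) < numComp G S := by exact_mod_cast zero_lt_one.trans h
  rw [le_div_iff₀ this, ← Nat.cast_le (α := ℝ)]
  push_cast
  constructor <;> intro h <;> linarith

theorem IsCutset.numComp_le {V : Type*} {G : SimpleGraph V} {S : Set V} (h : IsCutset G S)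
    (hG : toughness G = 1 / 2) : numComp G S ≤ 2 * S.ncard :=
  h.half_le_iff.1 (hG ▸ csInf_le (bddBelow_cutset_ratios G) ⟨S, h, rfl⟩)

theorem exists_isCutset_of_toughness_ne_zero {V : Type*} {G : SimpleGraph V}
    (hG : toughness G ≠ 0) : ∃ S, IsCutset G S := by
  by_contra! h
  refine hG ?_
  have : {r : ℝ | ∃ S : Set V, IsCutset G S ∧ r = (S.ncard : ℝ) / (numComp G S : ℝ)} = ∅ :=
    Set.eq_empty_of_forall_notMem fun r ⟨S, hS, _⟩ => h S hS
  rw [toughness, this, Real.sInf_empty]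

theorem toughness_lt_half {V : Type*} {G : SimpleGraph V} {S : Set V} (h : IsCutset G S)
    (hS : 2 * S.ncard < numComp G S) : toughness G < 1 / 2 :=
  (csInf_le (bddBelow_cutset_ratios G) ⟨S, h, rfl⟩).trans_lt
    (not_le.1 fun h' => hS.not_ge (h.half_le_iff.1 h'))

theorem exists_of_toughness_lt_half {V : Type*} {G : SimpleGraph V} (hc : ∃ S, IsCutset G S)
    (h : toughness G < 1 / 2) : ∃ S, IsCutset G S ∧ 2 * S.ncard < numComp G S := by
  obtain ⟨S₀, hS₀⟩ := hc
  obtain ⟨_, ⟨S, hS, rfl⟩, hlt⟩ := exists_lt_of_csInf_lt (by exact ⟨_, S₀, hS₀, rfl⟩) h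
  exact ⟨S, hS, not_le.1 fun h' => hlt.not_ge (hS.half_le_iff.2 h')⟩

theorem toughness_eq_half {V : Type*} {G : SimpleGraph V} {S : Set V} (hS : S.ncard = 1)
    (hS' : numComp G S = 2) (h : ∀ S, IsCutset G S → numComp G S ≤ 2 * S.ncard) :
    toughness G = 1 / 2 := by
  have hc : IsCutset G S := one_lt_two.trans_eq hS'.symm
  refine le_antisymm (csInf_le (bddBelow_cutset_ratios G) ⟨S, hc, by rw [hS, hS']; norm_num⟩)
    (le_csInf ⟨_, S, hc, rfl⟩ ?_)
  rintro _ ⟨S', hc', rfl⟩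
  exact hc'.half_le_iff.2 (h S' hc')

theorem IsCutset.deleteEdges {V : Type*} [Finite V] {G : SimpleGraph V} {S : Set V}
    (h : IsCutset G S) (F : Set (Sym2 V)) : IsCutset (G.deleteEdges F) S :=
  lt_of_lt_of_le h (ConnectedComponent.card_le_card_of_le
    (SimpleGraph.comap_monotone _ (G.deleteEdges_le F)))

namespace SPTree

theorem conn_empty {V : Type*} (T : SPTree V) : T.conn ∅ ∅ = true := by
  induction T with
  | edge u v => simp [conn, mem]
  | series l r hl hr | parallel l r hl hr => simp [conn, hl, hr]

theorem pieces_empty {V : Type*} (T : SPTree V) : T.pieces ∅ ∅ = 0 := by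
  induction T with
  | edge u v => rfl
  | series l r hl hr | parallel l r hl hr => simp [pieces, hl, hr, conn_empty]

end SPTree

namespace RepresentsSP

variable {V : Type*} {G : SimpleGraph V} {T : SPTree V} {F : Set (Sym2 V)}

theorem edgeSet (h : RepresentsSP G T) : G.edgeSet = T.edges := by
  rw [h.2.2, edgeSet_fromEdgeSet, sdiff_eq_left, Set.disjoint_left]
  exact fun e he => h.1.not_isDiag he

theorem exists_ncard_neighborSet_eq_one (h : RepresentsSP G T) (hT : IsPearlNecklace T) :
    ∃ w, (G.neighborSet w).ncard = 1 := by
  obtain ⟨u, v, r, rfl, -⟩ := hT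
  refine ⟨u, Set.ncard_eq_one.2 ⟨v, Set.ext fun w => ?_⟩⟩
  have huv : u ≠ v := h.1.1
  rw [mem_neighborSet, h.2.2, fromEdgeSet_adj, Set.mem_singleton_iff]
  constructor
  · rintro ⟨he | he, -⟩
    · exact Sym2.congr_right.1 he
    · exact (huv (h.1.eq_of_mem (Or.inl rfl)
        (SPTree.mem_verts_of_mem_edges he (Sym2.mem_mk_left u w)))).elim
  · rintro rfl
    exact ⟨Or.inl rfl, huv⟩

variable [Finite V]

theorem ncard_eq (h : RepresentsSP G T) (S : Set V) : S.ncard =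
    T.cuts S + (SPTree.mem S T.src).toNat + (SPTree.mem S T.tgt).toNat := by
  rw [← h.1.ncard_inter, h.2.1, Set.univ_inter]

theorem numComp_add_toNat (h : RepresentsSP G T) (S : Set V) :
    numComp (G.deleteEdges F) S + (T.conn F S).toNat =
      T.pieces F S + (!SPTree.mem S T.src).toNat + (!SPTree.mem S T.tgt).toNat := by
  have hc := h.1.card_connectedComponent (F := F) (S := S) (G := ⊥) fun _ _ _ _ _ => id
  have hn : numComp (G.deleteEdges F) S + S.ncard =
      Nat.card (T.alive F S).ConnectedComponent := by
    refine numComp_add_ncard fun x y => ?_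
    rw [SPTree.alive_adj, deleteEdges_adj, h.2.2, fromEdgeSet_adj]
    tauto
  have hbot : Nat.card (⊥ : SimpleGraph V).ConnectedComponent = Nat.card V := by
    refine (Nat.card_congr (Equiv.ofBijective (connectedComponentMk ⊥) ⟨fun x y hxy => ?_,
      Quot.mk_surjective⟩)).symm
    exact reachable_bot.1 (ConnectedComponent.exact hxy)
  have hr : (⊥ : SimpleGraph V).reach T.src T.tgt = false :=
    reach_eq_false_iff.2 fun h' => h.1.src_ne_tgt (reachable_bot.1 h')
  have hS := Set.ncard_add_ncard_compl S
  have hm : ∀ x, SPTree.mem Sᶜ x = !SPTree.mem S x := fun x => by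
    by_cases hx : x ∈ S <;> simp [SPTree.mem, hx]
  rw [bot_sup_eq, hbot, h.2.1, Set.univ_inter, hr, Bool.not_false, Bool.and_true, hm, hm] at hc
  omega

theorem tough_of_numComp_le (h : RepresentsSP G T)
    (hG : ∀ S, IsCutset G S → numComp G S ≤ 2 * S.ncard) :
    Profiles.Tough (T.profiles ∅) .isolated := by
  rintro i j c p q c' p' q' hX ⟨rfl, rfl, rfl⟩ hpos
  obtain ⟨S, -, hi, hj, rfl, rfl, rfl⟩ := h.1.exists_of_profiles hX
  have h₁ := h.ncard_eq S
  have h₂ := h.numComp_add_toNat (F := ∅) S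
  have h₃ := hG S
  rw [deleteEdges_empty] at h₂
  rw [SPTree.mem_eq_of_iff hi, SPTree.mem_eq_of_iff hj] at h₁ h₂
  rw [IsCutset] at h₃
  rw [Bool.or_false]
  omega

theorem numComp_le_of_tough (h : RepresentsSP G T)
    (hT : Profiles.Tough (T.profiles ∅) .isolated) {S : Set V} (hS : IsCutset G S) :
    numComp G S ≤ 2 * S.ncard := by
  have h₁ := h.ncard_eq S
  have h₂ := h.numComp_add_toNat (F := ∅) S
  rw [deleteEdges_empty] at h₂
  rcases S.ncard.eq_zero_or_pos with h₀ | h₀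
  · obtain rfl := (Set.ncard_eq_zero (Set.toFinite S)).1 h₀
    rw [IsCutset] at hS
    simp [SPTree.conn_empty, SPTree.pieces_empty, SPTree.mem] at h₂
    omega
  · have := hT _ _ _ _ _ _ _ _ (h.1.profiles_conn (S := S)) ⟨rfl, rfl, rfl⟩
      (by rwa [add_zero, ← h₁])
    rw [Bool.or_false] at this
    omega

theorem violates_iff (h : RepresentsSP G T) : Profiles.Violates (T.profiles F) .isolated ↔
    ∃ S, IsCutset (G.deleteEdges F) S ∧ 2 * S.ncard < numComp (G.deleteEdges F) S := by
  constructor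
  · rintro ⟨i, j, c, p, q, c', p', q', hX, ⟨rfl, rfl, rfl⟩, hv, hv'⟩
    obtain ⟨S, -, hi, hj, rfl, rfl, rfl⟩ := h.1.exists_of_profiles hX
    have h₁ := h.ncard_eq S
    have h₂ := h.numComp_add_toNat (F := F) S
    rw [SPTree.mem_eq_of_iff hi, SPTree.mem_eq_of_iff hj] at h₁ h₂
    rw [Bool.or_false] at hv hv'
    refine ⟨S, ?_, ?_⟩
    · rw [IsCutset]
      omega
    · omega
  · rintro ⟨S, hS, hlt⟩
    have h₁ := h.ncard_eq S
    have h₂ := h.numComp_add_toNat (F := F) S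
    rw [IsCutset] at hS
    refine ⟨_, _, _, _, _, _, _, _, h.1.profiles_conn (S := S), ⟨rfl, rfl, rfl⟩, ?_, ?_⟩ <;>
      rw [Bool.or_false] <;> omega

theorem minTough_of_isPearlNecklace (h : RepresentsSP G T) (hT : IsPearlNecklace T) :
    MinTough G (1 / 2) := by
  constructor
  · obtain ⟨S, -, hi, hj, hc, hp, hq⟩ := h.1.exists_of_profiles hT.profiles_one
    have h₁ := h.ncard_eq S
    have h₂ := h.numComp_add_toNat (F := ∅) S
    rw [SPTree.mem_eq_of_iff hi, SPTree.mem_eq_of_iff hj, hq] at h₁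
    rw [deleteEdges_empty, SPTree.mem_eq_of_iff hi, SPTree.mem_eq_of_iff hj, hc, hp] at h₂
    exact toughness_eq_half h₁ h₂ fun S hS => h.numComp_le_of_tough hT.tough hS
  · intro e he
    rw [h.edgeSet] at he
    obtain ⟨S, hS, hlt⟩ := h.violates_iff.1 (hT.violates h.1 he)
    exact toughness_lt_half hS hlt

theorem violates_of_minTough (h : RepresentsSP G T) (hG : MinTough G (1 / 2)) {e : Sym2 V}
    (he : e ∈ T.edges) : Profiles.Violates (T.profiles {e}) .isolated := by
  obtain ⟨S, hS⟩ := exists_isCutset_of_toughness_ne_zero (G := G) (by rw [hG.1]; norm_num)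
  exact h.violates_iff.2 (exists_of_toughness_lt_half ⟨S, hS.deleteEdges _⟩
    (hG.2 e (h.edgeSet ▸ he)))

theorem exists_isPearlNecklace (h : RepresentsSP G T) (hG : MinTough G (1 / 2)) :
    ∃ T', RepresentsSP G T' ∧ IsPearlNecklace T' := by
  obtain ⟨T', hb, hwf, -, -, hverts, hedges⟩ := (isPearlChain_of_tough h.1 Profiles.goodEnv_isolated
    (h.tough_of_numComp_le fun _ hS => hS.numComp_le hG.1)
    fun _ he => h.violates_of_minTough hG he).exists_isBeadSeq h.1
  have h' : RepresentsSP G T' := ⟨hwf, hverts.trans h.2.1, hedges ▸ h.2.2⟩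
  refine ⟨T', h', hb.isPearlNecklace hwf ?_ fun _ he => h'.violates_of_minTough hG he⟩
  rintro u v rfl
  obtain ⟨S, hS⟩ := exists_isCutset_of_toughness_ne_zero (G := G) (by rw [hG.1]; norm_num)
  have h₂ := h'.numComp_add_toNat (F := ∅) S
  rw [deleteEdges_empty] at h₂
  rw [IsCutset] at hS
  revert h₂
  simp only [SPTree.conn, SPTree.pieces, SPTree.src, SPTree.tgt]
  cases SPTree.mem S u <;> cases SPTree.mem S v <;> simp <;> omega

end RepresentsSP

/-- A series-parallel graph `G` is minimally 1/2-tough if and only if it is a series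
connection of pearls and at least two single edges with the first and last constituents
being edges. Consequently, every minimally 1/2-tough series-parallel graph has a vertex of
degree 1. -/
theorem minTough_half_iff_pearlNecklace {V : Type*} [Fintype V]
    (G : SimpleGraph V) (hsp : IsSPGraph G) :
    (MinTough G (1 / 2) ↔ ∃ T : SPTree V, RepresentsSP G T ∧ IsPearlNecklace T) ∧
    (MinTough G (1 / 2) → ∃ w : V, (G.neighborSet w).ncard = 1) := by
  obtain ⟨T, hT⟩ := hsp
  refine ⟨⟨hT.exists_isPearlNecklace, fun ⟨T', h, hn⟩ => h.minTough_of_isPearlNecklace hn⟩,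
    fun hG => ?_⟩
  obtain ⟨T', h, hn⟩ := hT.exists_isPearlNecklace hG
  exact h.exists_ncard_neighborSet_eq_one hn
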